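/- arXiv:2107.02272 — 4 statements merged into one kernel-verified Lean document; each statement's English description precedes it below -/
import Mathlib

section
/- Let R be a commutative ring, x, y ∈ R, and M an R-module. Then the second Čech local cohomology group H²_{(x,y)}(M), i.e. the cokernel of the map M_x ⊕ M_y → M_{xy} given by (a,b) ↦ b − a (images under the canonical localization maps), is isomorphic as an R-module to (M/y^∞)/x^∞, the cokernel of the localization map K → K_x, where K = M/y^∞ is the cokernel of the localization map M → M_y. -/
noncomputable section

variable {R : Type*} [CommRing R]

/-- The localization of `M` away from `x`. -/
abbrev Loc (x : R) (M : Type*) [AddCommGroup M] [Module R M] :=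
  LocalizedModule (Submonoid.powers x) M

/-- The canonical localization map `M → M_x`. -/
abbrev locMap (x : R) (M : Type*) [AddCommGroup M] [Module R M] : M →ₗ[R] Loc x M :=
  LocalizedModule.mkLinearMap (Submonoid.powers x) M

/-- The cokernel `M/x^∞` of the localization map `M → M_x`. -/
abbrev CokLoc (x : R) (M : Type*) [AddCommGroup M] [Module R M] :=
  Loc x M ⧸ LinearMap.range (locMap x M)

lemma isUnit_left (x y : R) (M : Type*) [AddCommGroup M] [Module R M] :
    ∀ s : Submonoid.powers x,
      IsUnit ((algebraMap R (Module.End R (Loc (x * y) M))) s) := by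
  rintro ⟨s, n, rfl⟩
  have h : IsUnit ((algebraMap R (Module.End R (Loc (x * y) M))) (x * y)) :=
    IsLocalizedModule.map_units (locMap (x * y) M) ⟨x * y, Submonoid.mem_powers _⟩
  rw [map_mul] at h
  have hx := (((Commute.all x y).map
    (algebraMap R (Module.End R (Loc (x * y) M)))).isUnit_mul_iff.mp h).1
  simpa [map_pow] using hx.pow n

lemma isUnit_right (x y : R) (M : Type*) [AddCommGroup M] [Module R M] :
    ∀ s : Submonoid.powers y,
      IsUnit ((algebraMap R (Module.End R (Loc (x * y) M))) s) := by
  rintro ⟨s, n, rfl⟩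
  have h : IsUnit ((algebraMap R (Module.End R (Loc (x * y) M))) (x * y)) :=
    IsLocalizedModule.map_units (locMap (x * y) M) ⟨x * y, Submonoid.mem_powers _⟩
  rw [map_mul] at h
  have hy := (((Commute.all x y).map
    (algebraMap R (Module.End R (Loc (x * y) M)))).isUnit_mul_iff.mp h).2
  simpa [map_pow] using hy.pow n

/-- The canonical map `M_x → M_{xy}`. -/
abbrev locMapLeft (x y : R) (M : Type*) [AddCommGroup M] [Module R M] :
    Loc x M →ₗ[R] Loc (x * y) M :=
  LocalizedModule.lift (Submonoid.powers x) (locMap (x * y) M) (isUnit_left x y M)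

/-- The canonical map `M_y → M_{xy}`. -/
abbrev locMapRight (x y : R) (M : Type*) [AddCommGroup M] [Module R M] :
    Loc y M →ₗ[R] Loc (x * y) M :=
  LocalizedModule.lift (Submonoid.powers y) (locMap (x * y) M) (isUnit_right x y M)

/-- The first differential `M → M_x ⊕ M_y` of the Čech complex of `(x, y)`. -/
def cechD0 (x y : R) (M : Type*) [AddCommGroup M] [Module R M] :
    M →ₗ[R] Loc x M × Loc y M :=
  (locMap x M).prod (locMap y M)

/-- The second differential `M_x ⊕ M_y → M_{xy}`, `(a, b) ↦ b - a`. -/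
def cechD1 (x y : R) (M : Type*) [AddCommGroup M] [Module R M] :
    Loc x M × Loc y M →ₗ[R] Loc (x * y) M :=
  (locMapRight x y M).comp (LinearMap.snd R _ _) -
    (locMapLeft x y M).comp (LinearMap.fst R _ _)

/-- `H⁰` of the Čech complex of `(x, y)` with coefficients in `M`. -/
def cechH0 (x y : R) (M : Type*) [AddCommGroup M] [Module R M] : Submodule R M :=
  LinearMap.ker (cechD0 x y M)

/-- `H¹` of the Čech complex of `(x, y)` with coefficients in `M`. -/
def cechH1 (x y : R) (M : Type*) [AddCommGroup M] [Module R M] :=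
  LinearMap.ker (cechD1 x y M) ⧸
    Submodule.comap (LinearMap.ker (cechD1 x y M)).subtype (LinearMap.range (cechD0 x y M))

instance (x y : R) (M : Type*) [AddCommGroup M] [Module R M] : AddCommGroup (cechH1 x y M) := by
  unfold cechH1; infer_instance

instance (x y : R) (M : Type*) [AddCommGroup M] [Module R M] : Module R (cechH1 x y M) := by
  unfold cechH1; infer_instance

/-- `H²` of the Čech complex of `(x, y)` with coefficients in `M`. -/
def cechH2 (x y : R) (M : Type*) [AddCommGroup M] [Module R M] :=
  Loc (x * y) M ⧸ LinearMap.range (cechD1 x y M)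

instance (x y : R) (M : Type*) [AddCommGroup M] [Module R M] : AddCommGroup (cechH2 x y M) := by
  unfold cechH2; infer_instance

instance (x y : R) (M : Type*) [AddCommGroup M] [Module R M] : Module R (cechH2 x y M) := by
  unfold cechH2; infer_instance


lemma locMapRight_locMap (x y : R) (M : Type*) [AddCommGroup M] [Module R M] (m : M) :
    locMapRight x y M (locMap y M m) = locMap (x * y) M m :=
  LinearMap.congr_fun (LocalizedModule.lift_comp _ _ (isUnit_right x y M)) m

lemma locMapLeft_locMap (x y : R) (M : Type*) [AddCommGroup M] [Module R M] (m : M) :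
    locMapLeft x y M (locMap x M m) = locMap (x * y) M m :=
  LinearMap.congr_fun (LocalizedModule.lift_comp _ _ (isUnit_left x y M)) m

lemma isLocalizedModule_right (x y : R) (M : Type*) [AddCommGroup M] [Module R M] :
    IsLocalizedModule (Submonoid.powers x) (locMapRight x y M) where
  map_units := isUnit_left x y M
  surj z := by
    obtain ⟨⟨m, ⟨_, n, rfl⟩⟩, h⟩ :=
      IsLocalizedModule.surj (Submonoid.powers (x * y)) (locMap (x * y) M) z
    have hinj := ((Module.End.isUnit_iff _).mp (isUnit_right x y M ⟨y ^ n, n, rfl⟩)).injective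
    have hw : (y ^ n) • IsLocalizedModule.mk' (locMap y M) m
        (⟨y ^ n, n, rfl⟩ : Submonoid.powers y) = locMap y M m :=
      IsLocalizedModule.mk'_cancel' (locMap y M) m (⟨y ^ n, n, rfl⟩ : Submonoid.powers y)
    refine ⟨⟨IsLocalizedModule.mk' (locMap y M) m (⟨y ^ n, n, rfl⟩ : Submonoid.powers y),
      ⟨x ^ n, n, rfl⟩⟩, hinj ?_⟩
    simp only [Module.algebraMap_end_apply, Submonoid.smul_def] at h ⊢
    rw [← map_smul, hw, locMapRight_locMap, ← h, smul_smul]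
    congr 1
    ring
  exists_of_eq {w₁ w₂} e := by
    obtain ⟨⟨m, ⟨_, k, rfl⟩⟩, h⟩ :=
      IsLocalizedModule.surj (Submonoid.powers y) (locMap y M) (w₁ - w₂)
    simp only [Submonoid.smul_def] at h
    have h0 : locMap (x * y) M m = locMap (x * y) M 0 := by
      rw [← locMapRight_locMap, ← h, map_smul, map_sub, e, sub_self, smul_zero, map_zero]
    obtain ⟨⟨_, n, rfl⟩, hc⟩ :=
      IsLocalizedModule.exists_of_eq (S := Submonoid.powers (x * y)) h0
    simp only [Submonoid.smul_def, smul_zero] at hc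
    have hinj := IsLocalizedModule.smul_injective (locMap y M)
      (⟨y ^ (n + k), n + k, rfl⟩ : Submonoid.powers y)
    refine ⟨⟨x ^ n, n, rfl⟩, ?_⟩
    rw [← sub_eq_zero, ← smul_sub]
    apply hinj
    simp only [Submonoid.smul_def, smul_zero]
    rw [smul_smul, show y ^ (n + k) * x ^ n = (x * y) ^ n * y ^ k by ring, mul_smul, h,
      ← map_smul, hc, map_zero]

/-- The second Čech local cohomology group `H²_{(x,y)}(M)` is isomorphic to
`(M/y^∞)/x^∞`, the cokernel of `K → K_x` where `K = M/y^∞` is the cokernel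
of `M → M_y`. -/
theorem cechH2_iso_cokLoc_cokLoc (x y : R) (M : Type*) [AddCommGroup M] [Module R M] :
    Nonempty (cechH2 x y M ≃ₗ[R] CokLoc x (CokLoc y M)) := by
  have := isLocalizedModule_right x y M
  let q := (LinearMap.range (locMap y M)).mkQ
  let f : Loc (x * y) M →ₗ[R] Loc x (CokLoc y M) :=
    IsLocalizedModule.map (Submonoid.powers x) (locMapRight x y M) (locMap x (CokLoc y M)) q
  have hfr : ∀ w, f (locMapRight x y M w) = locMap x (CokLoc y M) (q w) :=
    fun w => IsLocalizedModule.map_apply (Submonoid.powers x) _ _ q w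
  have hf : Function.Surjective f :=
    IsLocalizedModule.map_surjective _ _ _ _ (Submodule.mkQ_surjective _)
  have hl : IsLocalizedModule.map (Submonoid.powers x) (locMap x M) (locMapRight x y M)
      (locMap y M) = locMapLeft x y M := by
    apply IsLocalizedModule.ext (Submonoid.powers x) (locMap x M) (isUnit_left x y M)
    rw [IsLocalizedModule.map_comp]
    ext m
    exact (locMapRight_locMap x y M m).trans (locMapLeft_locMap x y M m).symm
  have hex : Function.Exact (locMapLeft x y M) f := by
    rw [← hl]
    exact IsLocalizedModule.map_exact _ _ _ _ _ _ (LinearMap.exact_map_mkQ_range _)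
  let g : Loc (x * y) M →ₗ[R] CokLoc x (CokLoc y M) :=
    (LinearMap.range (locMap x (CokLoc y M))).mkQ ∘ₗ f
  have hg : Function.Surjective g := (Submodule.mkQ_surjective _).comp hf
  have hk : LinearMap.range (cechD1 x y M) = LinearMap.ker g := by
    ext z
    have hz : z ∈ LinearMap.ker g ↔ f z ∈ LinearMap.range (locMap x (CokLoc y M)) :=
      Submodule.Quotient.mk_eq_zero _
    rw [hz]
    constructor
    · rintro ⟨⟨a, b⟩, rfl⟩
      refine ⟨q b, ?_⟩
      change _ = f (locMapRight x y M b - locMapLeft x y M a)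
      rw [map_sub, hfr, hex.apply_apply_eq_zero, sub_zero]
    · rintro ⟨c, hc⟩
      obtain ⟨b, rfl⟩ := Submodule.mkQ_surjective _ c
      obtain ⟨a, ha⟩ := (hex (locMapRight x y M b - z)).mp (by
        rw [map_sub, hfr, ← hc, sub_self])
      refine ⟨(a, b), ?_⟩
      change locMapRight x y M b - locMapLeft x y M a = z
      rw [ha, sub_sub_cancel]
  exact ⟨(Submodule.quotEquivOfEq _ _ hk).trans (g.quotKerEquivOfSurjective hg)⟩

end
end

section
/- Let R be a commutative ring, x, y ∈ R, and M an R-module. If every y-power torsion element of M is x-power torsion, i.e. Γ_y M ⊆ Γ_x M, then (Γ_y M)/x^∞ = 0 and the natural map H¹_{(x,y)}(M) → Γ_x(M/y^∞) is an isomorphism of R-modules. -/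
noncomputable section

variable {R : Type*} [CommRing R]

/-- The `x`-power torsion submodule `Γ_x M = {m ∈ M : xⁿ • m = 0 for some n}`. -/
def elPowerTorsion (x : R) (M : Type*) [AddCommGroup M] [Module R M] : Submodule R M :=
  ⨆ n : ℕ, Submodule.torsionBy R M (x ^ n)

lemma mem_elPT (x : R) {M : Type*} [AddCommGroup M] [Module R M] (m : M) :
    m ∈ elPowerTorsion x M ↔ ∃ n : ℕ, x ^ n • m = 0 := by
  unfold elPowerTorsion
  rw [Submodule.mem_iSup_of_directed]
  · simp [Submodule.mem_torsionBy_iff]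
  · apply Monotone.directed_le
    intro a b hab m hm
    rw [Submodule.mem_torsionBy_iff] at hm ⊢
    obtain ⟨c, rfl⟩ := Nat.exists_eq_add_of_le hab
    rw [pow_add, mul_comm, mul_smul, hm, smul_zero]

lemma loc_den (x : R) {M : Type*} [AddCommGroup M] [Module R M] (a : Loc x M) :
    ∃ (n : ℕ) (m : M), x ^ n • a = locMap x M m := by
  obtain ⟨⟨m, ⟨_, n, rfl⟩⟩, hm⟩ := IsLocalizedModule.surj (Submonoid.powers x) (locMap x M) a
  exact ⟨n, m, hm⟩

lemma loc_inj (x : R) {M : Type*} [AddCommGroup M] [Module R M] (n : ℕ) (a : Loc x M)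
    (h : x ^ n • a = 0) : a = 0 := by
  have := IsLocalizedModule.smul_injective (locMap x M) (⟨x ^ n, n, rfl⟩ : Submonoid.powers x)
  apply this
  simpa [Submonoid.smul_def] using h

lemma loc_zero (x : R) {M : Type*} [AddCommGroup M] [Module R M] (m : M)
    : locMap x M m = 0 ↔ ∃ n : ℕ, x ^ n • m = 0 := by
  rw [IsLocalizedModule.eq_zero_iff (Submonoid.powers x) (locMap x M)]
  constructor
  · rintro ⟨⟨_, n, rfl⟩, h⟩
    exact ⟨n, h⟩
  · rintro ⟨n, h⟩
    exact ⟨⟨_, n, rfl⟩, h⟩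

lemma right_loc (x y : R) {M : Type*} [AddCommGroup M] [Module R M] (m : M) :
    locMapRight x y M (locMap y M m) = locMap (x * y) M m := by
  exact LinearMap.congr_fun (LocalizedModule.lift_comp (Submonoid.powers y)
    (locMap (x * y) M) (isUnit_right x y M)) m

lemma left_loc (x y : R) {M : Type*} [AddCommGroup M] [Module R M] (m : M) :
    locMapLeft x y M (locMap x M m) = locMap (x * y) M m := by
  exact LinearMap.congr_fun (LocalizedModule.lift_comp (Submonoid.powers x)
    (locMap (x * y) M) (isUnit_left x y M)) m

lemma right_ker (x y : R) {M : Type*} [AddCommGroup M] [Module R M] (b : Loc y M)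
    (hb : locMapRight x y M b = 0) : ∃ n : ℕ, x ^ n • b = 0 := by
  obtain ⟨k, m, hm⟩ := loc_den y b
  have h1 : locMap (x * y) M m = 0 := by
    rw [← right_loc, ← hm, map_smul, hb, smul_zero]
  obtain ⟨n, hn⟩ := (loc_zero _ _).1 h1
  refine ⟨n, loc_inj y k _ (loc_inj y n _ ?_)⟩
  rw [smul_comm (y ^ k), hm, ← map_smul, ← map_smul, smul_smul, ← mul_pow, mul_comm y x, hn,
    map_zero]

lemma left_ker (x y : R) {M : Type*} [AddCommGroup M] [Module R M]
    (h : elPowerTorsion y M ≤ elPowerTorsion x M) (a : Loc x M)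
    (ha : locMapLeft x y M a = 0) : a = 0 := by
  obtain ⟨k, m, hm⟩ := loc_den x a
  have h1 : locMap (x * y) M m = 0 := by
    rw [← left_loc, ← hm, map_smul, ha, smul_zero]
  obtain ⟨n, hn⟩ := (loc_zero _ _).1 h1
  have h2 : x ^ n • m ∈ elPowerTorsion y M :=
    (mem_elPT _ _).2 ⟨n, by rw [smul_smul, ← mul_pow, mul_comm y x, hn]⟩
  obtain ⟨l, hl⟩ := (mem_elPT _ _).1 (h h2)
  refine loc_inj x k _ (loc_inj x n _ (loc_inj x l _ ?_))
  rw [hm, ← map_smul, ← map_smul, hl, map_zero]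

lemma mem_ker_d1 (x y : R) {M : Type*} [AddCommGroup M] [Module R M] (p : Loc x M × Loc y M) :
    p ∈ LinearMap.ker (cechD1 x y M) ↔ locMapRight x y M p.2 = locMapLeft x y M p.1 := by
  rw [LinearMap.mem_ker, ← sub_eq_zero (a := locMapRight x y M p.2)]
  rfl

/-- The map `(a, b) ↦ [b]` on one-cocycles. -/
def gPre (x y : R) (M : Type*) [AddCommGroup M] [Module R M] :
    LinearMap.ker (cechD1 x y M) →ₗ[R] elPowerTorsion x (CokLoc y M) :=
  LinearMap.codRestrict _
    ((LinearMap.range (locMap y M)).mkQ ∘ₗ LinearMap.snd R (Loc x M) (Loc y M) ∘ₗ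
      (LinearMap.ker (cechD1 x y M)).subtype) (by
    rintro ⟨⟨a, b⟩, hp⟩
    rw [mem_ker_d1] at hp
    obtain ⟨n, m, hm⟩ := loc_den x a
    have h1 : locMapRight x y M (x ^ n • b - locMap y M m) = 0 := by
      rw [map_sub, map_smul, hp, right_loc, ← left_loc, ← hm, map_smul, sub_self]
    obtain ⟨k, hk⟩ := right_ker x y _ h1
    rw [mem_elPT]
    refine ⟨k + n, ?_⟩
    change x ^ (k + n) • (LinearMap.range (locMap y M)).mkQ b = 0
    rw [← map_smul, Submodule.mkQ_apply, Submodule.Quotient.mk_eq_zero]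
    refine ⟨x ^ k • m, ?_⟩
    rw [smul_sub, sub_eq_zero] at hk
    rw [map_smul, ← hk, smul_smul, pow_add])

lemma gPre_ker_iff (x y : R) {M : Type*} [AddCommGroup M] [Module R M]
    (p : LinearMap.ker (cechD1 x y M)) :
    gPre x y M p = 0 ↔ ∃ m, locMap y M m = p.1.2 := by
  rw [← Subtype.coe_inj]
  change (LinearMap.range (locMap y M)).mkQ p.1.2 = 0 ↔ _
  rw [Submodule.mkQ_apply, Submodule.Quotient.mk_eq_zero]
  rfl

lemma gPre_surj (x y : R) (M : Type*) [AddCommGroup M] [Module R M] :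
    Function.Surjective (gPre x y M) := by
  rintro ⟨q, hq⟩
  obtain ⟨b, rfl⟩ := Submodule.mkQ_surjective _ q
  obtain ⟨n, hn⟩ := (mem_elPT _ _).1 hq
  rw [← map_smul, Submodule.mkQ_apply, Submodule.Quotient.mk_eq_zero] at hn
  obtain ⟨m, hm⟩ := hn
  let a : Loc x M := IsLocalizedModule.mk' (locMap x M) m
    (⟨x ^ n, n, rfl⟩ : Submonoid.powers x)
  have ha : x ^ n • a = locMap x M m := by
    exact IsLocalizedModule.mk'_cancel' (locMap x M) m
      (⟨x ^ n, n, rfl⟩ : Submonoid.powers x)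
  have hu : ∀ c : Loc (x * y) M, x ^ n • c = 0 → c = 0 := by
    intro c hc
    refine loc_inj (x * y) n _ ?_
    rw [mul_pow, mul_comm (x ^ n), mul_smul, hc, smul_zero]
  refine ⟨⟨(a, b), (mem_ker_d1 _ _ _).2 (sub_eq_zero.1 (hu _ ?_))⟩, rfl⟩
  rw [smul_sub, ← map_smul, ← map_smul, ha, ← hm, left_loc, right_loc, sub_self]

/-- The natural map `H¹ → Γ_x(M/y^∞)`. -/
def gMap (x y : R) (M : Type*) [AddCommGroup M] [Module R M] :
    cechH1 x y M →ₗ[R] elPowerTorsion x (CokLoc y M) :=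
  Submodule.liftQ (Submodule.comap (LinearMap.ker (cechD1 x y M)).subtype
    (LinearMap.range (cechD0 x y M))) (gPre x y M) (by
    rintro p ⟨m, hm⟩
    rw [LinearMap.mem_ker, gPre_ker_iff]
    exact ⟨m, congrArg Prod.snd hm⟩)

lemma gMap_bij (x y : R) (M : Type*) [AddCommGroup M] [Module R M]
    (h : elPowerTorsion y M ≤ elPowerTorsion x M) : Function.Bijective (gMap x y M) := by
  constructor
  · rw [injective_iff_map_eq_zero]
    intro q hq
    obtain ⟨p, rfl⟩ := Submodule.Quotient.mk_surjective _ q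
    have hp : gPre x y M p = 0 := hq
    obtain ⟨m, hm⟩ := (gPre_ker_iff x y p).1 hp
    refine (Submodule.Quotient.mk_eq_zero _).2 ?_
    refine ⟨m, Prod.ext ?_ hm⟩
    refine sub_eq_zero.1 (left_ker x y h _ ?_)
    change locMapLeft x y M (locMap x M m - p.1.1) = 0
    rw [map_sub, ← (mem_ker_d1 x y p.1).1 p.2, ← hm, left_loc, right_loc, sub_self]
  · intro z
    obtain ⟨p, hp⟩ := gPre_surj x y M z
    exact ⟨Submodule.Quotient.mk p, hp⟩

lemma cok_subsingleton (x y : R) (M : Type*) [AddCommGroup M] [Module R M]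
    (h : elPowerTorsion y M ≤ elPowerTorsion x M) :
    Subsingleton (CokLoc x (elPowerTorsion y M)) := by
  have : ∀ a : Loc x (elPowerTorsion y M), a = 0 := by
    intro a
    obtain ⟨k, m, hm⟩ := loc_den x a
    obtain ⟨n, hn⟩ := (mem_elPT _ _).1 (h m.2)
    refine loc_inj x k _ ?_
    rw [hm, loc_zero]
    exact ⟨n, Subtype.ext hn⟩
  refine ⟨fun p q => ?_⟩
  obtain ⟨a, rfl⟩ := Submodule.mkQ_surjective _ p
  obtain ⟨b, rfl⟩ := Submodule.mkQ_surjective _ q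
  rw [this a, this b]

/-- If every `y`-power torsion element of `M` is `x`-power torsion, then
`(Γ_y M)/x^∞ = 0` and the natural map `H¹_{(x,y)}(M) → Γ_x(M/y^∞)` appearing in the
short exact sequence `0 → (Γ_y M)/x^∞ → H¹_{(x,y)}(M) → Γ_x(M/y^∞) → 0`
is an isomorphism of `R`-modules. -/
theorem cechH1_iso_of_le (x y : R) (M : Type*) [AddCommGroup M] [Module R M]
    (h : elPowerTorsion y M ≤ elPowerTorsion x M) :
    Subsingleton (CokLoc x (elPowerTorsion y M)) ∧
    ∃ (f : CokLoc x (elPowerTorsion y M) →ₗ[R] cechH1 x y M)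
      (g : cechH1 x y M →ₗ[R] elPowerTorsion x (CokLoc y M)),
      Function.Injective f ∧ Function.Exact f g ∧ Function.Surjective g ∧
        Function.Bijective g := by
  have hs := cok_subsingleton x y M h
  have hg := gMap_bij x y M h
  refine ⟨hs, 0, gMap x y M, fun _ _ _ => Subsingleton.elim _ _, ?_, hg.2, hg⟩
  intro z
  rw [map_eq_zero_iff _ hg.1]
  constructor
  · rintro rfl
    exact ⟨0, rfl⟩
  · rintro ⟨_, rfl⟩
    rfl

end
end

section
/- Let R be a commutative Noetherian ring, J ⊆ R an ideal, and N an R-module. Let R[t] be the polynomial ring in one variable, N[t] = N ⊗_R R[t], and let J̃ = J·R[t] + (t) ⊆ R[t]. Then H⁰_{J̃}(N[t]) = 0, and for every s ≥ 1 there is an isomorphism of R[t]-modules H^s_{J̃}(N[t]) ≅ H^{s−1}_J(N) ⊗_ℤ (ℤ[t, t⁻¹]/ℤ[t]), where t acts on the second tensor factor and J acts on the first. -/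
open CategoryTheory

noncomputable section

universe u

/-- `ℤ[t,t⁻¹]/ℤ[t]`: the cokernel of the inclusion of `ℤ[t]` into the ring of Laurent
polynomials; it is the free `ℤ`-module on `t^{-k}` for `k ≥ 1`, with `t` acting by
shift (truncating at `t⁰`). -/
abbrev LaurentQuot : Type :=
  LaurentPolynomial ℤ ⧸
    LinearMap.range (Algebra.linearMap (Polynomial ℤ) (LaurentPolynomial ℤ))

namespace LCP

open Limits Opposite

section compare
variable {R : Type u} [CommRing R] {X X' Y : ModuleCat.{u} R}

/-- cocycles -/
def cocyc (P : ProjectiveResolution X) (n : ℕ) (Y : ModuleCat.{u} R) :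
    Submodule R (P.complex.X n ⟶ Y) :=
  LinearMap.ker (Linear.leftComp R Y (P.complex.d (n + 1) n))

lemma mem_cocyc {P : ProjectiveResolution X} {n : ℕ} {f : P.complex.X n ⟶ Y} :
    f ∈ cocyc P n Y ↔ P.complex.d (n + 1) n ≫ f = 0 := Iff.rfl

def newMk (P : ProjectiveResolution X) (n : ℕ) (Y : ModuleCat.{u} R) :
    cocyc P n Y →ₗ[R] Abelian.Ext X Y n where
  toFun f := P.extMk f.1 (n + 1) rfl (mem_cocyc.1 f.2)
  map_add' f g := (P.add_extMk _ _ _ _ _ _).symm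
  map_smul' r f := by
    rw [RingHom.id_apply, Abelian.Ext.smul_eq_comp_mk₀, P.extMk_comp_mk₀]
    congr 1

lemma newMk_surj (P : ProjectiveResolution X) (n : ℕ) (Y : ModuleCat.{u} R) :
    Function.Surjective (newMk P n Y) := fun x => by
  obtain ⟨f, hf, h⟩ := P.extMk_surjective x (n + 1) rfl
  exact ⟨⟨f, hf⟩, h⟩

lemma newMk_eq_zero_succ (P : ProjectiveResolution X) (n : ℕ) (Y : ModuleCat.{u} R)
    (f : cocyc P (n + 1) Y) : newMk P (n + 1) Y f = 0 ↔
      ∃ g : P.complex.X n ⟶ Y, P.complex.d (n + 1) n ≫ g = f.1 :=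
  P.extMk_eq_zero_iff _ _ rfl (mem_cocyc.1 f.2) _ rfl

lemma newMk_eq_zero_zero (P : ProjectiveResolution X) (Y : ModuleCat.{u} R)
    (f : cocyc P 0 Y) : newMk P 0 Y f = 0 ↔ f.1 = 0 := by
  constructor
  · intro h
    change P.extMk f.1 1 rfl (mem_cocyc.1 f.2) = 0 at h
    rw [← P.extEquivCohomologyClass.apply_eq_iff_eq,
      ProjectiveResolution.extEquivCohomologyClass_extMk,
      ProjectiveResolution.extEquivCohomologyClass_zero,
      CochainComplex.HomComplex.CohomologyClass.mk_eq_zero_iff,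
      CochainComplex.HomComplex.Cocycle.toSingleMk_mem_coboundaries_iff _ _ _ _ _ 1 (by simp)] at h
    obtain ⟨g, hg⟩ := h
    have hz : IsZero (P.cochainComplex.X 1) := by
      exact CochainComplex.isZero_of_isStrictlyLE _ 0 1 (by simp)
    rw [hz.eq_of_src g 0, comp_zero, eq_comm, Preadditive.IsIso.comp_left_eq_zero] at hg
    exact hg
  · intro h
    have : f = 0 := Subtype.ext h
    rw [this, map_zero]

lemma newMk_natural {P : ProjectiveResolution X} {P' : ProjectiveResolution X'} {g : X' ⟶ X}
    (φ : ProjectiveResolution.Hom P' P g) (n : ℕ) (f : cocyc P n Y) (f' : cocyc P' n Y)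
    (h : φ.hom.f n ≫ f.1 = f'.1) :
    (Abelian.Ext.mk₀ g).comp (newMk P n Y f) (zero_add _) = newMk P' n Y f' := by
  obtain ⟨f', hf'⟩ := f'
  subst h
  exact ProjectiveResolution.mk₀_comp_extMk f.1 _ rfl f.2 φ

abbrev OldExt (X Y : ModuleCat.{u} R) (n : ℕ) : ModuleCat.{u} R :=
  ((Ext R (ModuleCat.{u} R) n).obj (op X)).obj Y

def toCyc (P : ProjectiveResolution X) (n : ℕ) (Y : ModuleCat.{u} R) :
    ModuleCat.of R (cocyc P n Y) ⟶ (P.complex.linearYonedaObj R Y).cycles n :=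
  (P.complex.linearYonedaObj R Y).liftCycles (ModuleCat.ofHom (cocyc P n Y).subtype) (n + 1)
    (by simp) (by ext f; exact f.2)

def oldMk (P : ProjectiveResolution X) (n : ℕ) (Y : ModuleCat.{u} R) :
    cocyc P n Y →ₗ[R] OldExt X Y n :=
  (toCyc P n Y ≫ HomologicalComplex.homologyπ _ n ≫ (P.isoExt n Y).inv).hom

lemma toCyc_i (P : ProjectiveResolution X) (n : ℕ) (Y : ModuleCat.{u} R) :
  toCyc P n Y ≫ HomologicalComplex.iCycles _ n = (ModuleCat.ofHom (cocyc P n Y).subtype) := by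
  exact HomologicalComplex.liftCycles_i _ _ _ _ _

lemma toCyc_surj (P : ProjectiveResolution X) (n : ℕ) (Y : ModuleCat.{u} R) :
    Function.Surjective (toCyc P n Y) := by
  intro z
  let f : P.complex.X n ⟶ Y := (P.complex.linearYonedaObj R Y).iCycles n z
  have hf : f ∈ cocyc P n Y := by
    have := (P.complex.linearYonedaObj R Y).iCycles_d n (n + 1)
    exact congr($(this) z)
  refine ⟨⟨f, hf⟩, ?_⟩
  have : Function.Injective ((P.complex.linearYonedaObj R Y).iCycles n) :=
    (ModuleCat.mono_iff_injective _).1 inferInstance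
  apply this
  exact congr($(toCyc_i P n Y) ⟨f, hf⟩)

lemma oldMk_surj (P : ProjectiveResolution X) (n : ℕ) (Y : ModuleCat.{u} R) :
    Function.Surjective (oldMk P n Y) := by
  have h1 : Function.Surjective ((P.complex.linearYonedaObj R Y).homologyπ n) :=
    (ModuleCat.epi_iff_surjective _).1 inferInstance
  have h2 : Function.Surjective ((P.isoExt (R := R) n Y).inv) :=
    (ModuleCat.epi_iff_surjective _).1 inferInstance
  exact h2.comp (h1.comp (toCyc_surj P n Y))

lemma oldMk_eq_zero_iff (P : ProjectiveResolution X) (n : ℕ) (Y : ModuleCat.{u} R)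
    (f : cocyc P n Y) : oldMk P n Y f = 0 ↔
      ∃ g : P.complex.X ((ComplexShape.down ℕ).next n) ⟶ Y, P.complex.d n _ ≫ g = f.1 := by
  have h2 : Function.Injective ((P.isoExt (R := R) n Y).inv) :=
    (ModuleCat.mono_iff_injective _).1 inferInstance
  have h3 : Function.Injective ((P.complex.linearYonedaObj R Y).iCycles n) :=
    (ModuleCat.mono_iff_injective _).1 inferInstance
  have h4 : oldMk P n Y f = 0 ↔ (P.complex.linearYonedaObj R Y).homologyπ n (toCyc P n Y f) = 0 := by
    rw [← h2.eq_iff, map_zero]; rfl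
  rw [h4]
  have hex := ShortComplex.exact_of_g_is_cokernel (ShortComplex.mk _ _ ((P.complex.linearYonedaObj R Y).toCycles_comp_homologyπ _ n)) ((P.complex.linearYonedaObj R Y).homologyIsCokernel _ n rfl)
  rw [ShortComplex.moduleCat_exact_iff] at hex
  have hi : (P.complex.linearYonedaObj R Y).iCycles n (toCyc P n Y f) = f.1 := congr($(toCyc_i P n Y) f)
  constructor
  · intro h
    obtain ⟨g, hg⟩ := hex _ h
    refine ⟨g, ?_⟩
    rw [← hi, ← hg]
    exact congr($((P.complex.linearYonedaObj R Y).toCycles_i _ n) g).symm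
  · rintro ⟨g, hg⟩
    have : (P.complex.linearYonedaObj R Y).toCycles _ n g = toCyc P n Y f := by
      apply h3
      rw [hi, ← hg]
      exact congr($((P.complex.linearYonedaObj R Y).toCycles_i _ n) g)
    rw [← this]
    exact congr($((P.complex.linearYonedaObj R Y).toCycles_comp_homologyπ _ n) g)

lemma ker_eq (P : ProjectiveResolution X) (n : ℕ) (Y : ModuleCat.{u} R) :
    LinearMap.ker (oldMk P n Y) = LinearMap.ker (newMk P n Y) := by
  ext f
  rw [LinearMap.mem_ker, LinearMap.mem_ker, oldMk_eq_zero_iff]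
  cases n with
  | zero =>
    rw [newMk_eq_zero_zero, P.complex.shape _ _ (by simp)]
    simp [eq_comm]
  | succ n =>
    rw [newMk_eq_zero_succ]
    have : (ComplexShape.down ℕ).next (n + 1) = n := by simp
    rw [this]

lemma oldMk_natural {P : ProjectiveResolution X} {P' : ProjectiveResolution X'} {g : X' ⟶ X}
    (φ : ProjectiveResolution.Hom P' P g) (n : ℕ) (f : cocyc P n Y) (f' : cocyc P' n Y)
    (h : φ.hom.f n ≫ f.1 = f'.1) :
    ((Ext R (ModuleCat.{u} R) n).map g.op).app Y (oldMk P n Y f) = oldMk P' n Y f' := by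
  let F := ((linearYoneda R (ModuleCat.{u} R)).obj Y).rightOp
  have hN := P'.isoLeftDerivedObj_hom_naturality g P φ.hom φ.hom_f_zero_comp_π_f_zero F n
  let Φ := (F.mapHomologicalComplex (ComplexShape.down ℕ)).map φ.hom
  let Ψ : P.complex.linearYonedaObj R Y ⟶ P'.complex.linearYonedaObj R Y :=
    (HomologicalComplex.unopFunctor _ _).map Φ.op
  have hU : HomologicalComplex.homologyMap Ψ n ≫ (P'.isoExt (R := R) n Y).inv =
      (P.isoExt (R := R) n Y).inv ≫ ((Ext R (ModuleCat.{u} R) n).map g.op).app Y := by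
    have h1 := HomologicalComplex.homologyOp_hom_naturality Ψ n
    have h1' := congr($(h1).unop)
    have h2 := congr($(hN).unop)
    have e1 : (P.isoExt (R := R) n Y).inv = ((P.complex.linearYonedaObj R Y).homologyOp n).hom.unop ≫
      (P.isoLeftDerivedObj F n).hom.unop := rfl
    have e2 : (P'.isoExt (R := R) n Y).inv =
      ((P'.complex.linearYonedaObj R Y).homologyOp n).hom.unop ≫
      (P'.isoLeftDerivedObj F n).hom.unop := rfl
    rw [e1, e2]
    refine (Category.assoc _ _ _).symm.trans ?_
    refine (congrArg (· ≫ (P'.isoLeftDerivedObj F n).hom.unop) h1'.symm).trans ?_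
    refine (Category.assoc _ _ _).trans (Eq.trans ?_ (Category.assoc _ _ _).symm)
    exact congrArg (((P.complex.linearYonedaObj R Y).homologyOp n).hom.unop ≫ ·) h2.symm
  have hc : HomologicalComplex.cyclesMap Ψ n (toCyc P n Y f) = toCyc P' n Y f' := by
    have h3 : Function.Injective ((P'.complex.linearYonedaObj R Y).iCycles n) :=
      (ModuleCat.mono_iff_injective _).1 inferInstance
    apply h3
    refine (congr($(HomologicalComplex.cyclesMap_i Ψ n) (toCyc P n Y f))).trans ?_
    refine Eq.trans ?_ (congr($(toCyc_i P' n Y) f')).symm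
    refine Eq.trans ?_ h
    change Ψ.f n ((P.complex.linearYonedaObj R Y).iCycles n (toCyc P n Y f)) = _
    have hi : (P.complex.linearYonedaObj R Y).iCycles n (toCyc P n Y f) = f.1 :=
      congr($(toCyc_i P n Y) f)
    rw [hi]
    rfl
  have h5 := congr($(hU) ((P.complex.linearYonedaObj R Y).homologyπ n (toCyc P n Y f)))
  refine h5.symm.trans ?_
  change (P'.isoExt (R := R) n Y).inv (HomologicalComplex.homologyMap Ψ n
    ((P.complex.linearYonedaObj R Y).homologyπ n (toCyc P n Y f))) =
     (P'.isoExt (R := R) n Y).inv ((P'.complex.linearYonedaObj R Y).homologyπ n (toCyc P' n Y f'))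
  congr 1
  rw [← hc]
  exact congr($(HomologicalComplex.homologyπ_naturality Ψ n) (toCyc P n Y f))

def cmp (P : ProjectiveResolution X) (n : ℕ) (Y : ModuleCat.{u} R) :
    Abelian.Ext X Y n ≃ₗ[R] OldExt X Y n :=
  ((newMk P n Y).quotKerEquivOfSurjective (newMk_surj P n Y)).symm ≪≫ₗ
    Submodule.quotEquivOfEq _ _ (ker_eq P n Y).symm ≪≫ₗ
    (oldMk P n Y).quotKerEquivOfSurjective (oldMk_surj P n Y)

lemma cmp_newMk (P : ProjectiveResolution X) (n : ℕ) (Y : ModuleCat.{u} R) (f) :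
    cmp P n Y (newMk P n Y f) = oldMk P n Y f := by
  have : ((newMk P n Y).quotKerEquivOfSurjective (newMk_surj P n Y)).symm (newMk P n Y f) =
      Submodule.Quotient.mk f := by
    rw [LinearEquiv.symm_apply_eq]; rfl
  simp only [cmp, LinearEquiv.trans_apply, this]
  rfl

lemma cmp_natural (P : ProjectiveResolution X) (P' : ProjectiveResolution X') (g : X' ⟶ X) (n : ℕ)
    (x : Abelian.Ext X Y n) :
    ((Ext R (ModuleCat.{u} R) n).map g.op).app Y (cmp P n Y x) =
      cmp P' n Y ((Abelian.Ext.mk₀ g).comp x (zero_add _)) := by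
  obtain ⟨f, rfl⟩ := newMk_surj P n Y x
  let φ : ProjectiveResolution.Hom P' P g := ⟨ProjectiveResolution.lift g P' P, ProjectiveResolution.lift_commutes_zero g P' P⟩
  let f' : cocyc P' n Y := ⟨φ.hom.f n ≫ f.1, by
    have := f.2
    rw [mem_cocyc] at this ⊢
    rw [← φ.hom.comm_assoc, this, comp_zero]⟩
  rw [newMk_natural φ n f f' rfl, cmp_newMk, cmp_newMk, oldMk_natural φ n f f' rfl]

end compare
end LCP

namespace LCP

open Limits Opposite

section dl
variable {A : Type u} [CommRing A] (I : Ideal A) (s : ℕ) (M : ModuleCat.{u} A)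

abbrev q (n : ℕ) : ModuleCat.{u} A :=
  (localCohomology.ringModIdeals (localCohomology.idealPowersDiagram I)).obj (op n)

abbrev qπ {n m : ℕ} (h : n ≤ m) : q I m ⟶ q I n :=
  (localCohomology.ringModIdeals (localCohomology.idealPowersDiagram I)).map (homOfLE h).op

abbrev EX (n : ℕ) : Type u := Abelian.Ext (q I n) M s

def tr (n m : ℕ) (h : n ≤ m) : EX I s M n →ₗ[A] EX I s M m :=
  Abelian.Ext.bilinearCompOfLinear A _ _ _ _ _ _ (zero_add s) (Abelian.Ext.mk₀ (qπ I h))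

lemma tr_apply (n m : ℕ) (h : n ≤ m) (x) :
    tr I s M n m h x = (Abelian.Ext.mk₀ (qπ I h)).comp x (zero_add s) := rfl

instance : DirectedSystem (EX I s M) (tr I s M · · ·) where
  map_self n x := by
    rw [tr_apply]
    have : qπ I (le_refl n) = 𝟙 _ := CategoryTheory.Functor.map_id _ _
    rw [this]; simp
  map_map k j i h1 h2 x := by
    simp only [tr_apply]
    have : qπ I (h1.trans h2) = qπ I h2 ≫ qπ I h1 := by
      exact (Functor.map_comp _ (homOfLE h2).op (homOfLE h1).op)
    rw [this, ← Abelian.Ext.mk₀_comp_mk₀, Abelian.Ext.comp_assoc_of_second_deg_zero]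

abbrev D : Type u := Module.DirectLimit (EX I s M) (tr I s M)

abbrev dg : ℕᵒᵖᵒᵖ ⥤ ModuleCat.{u} A ⥤ ModuleCat.{u} A :=
  localCohomology.diagram (localCohomology.idealPowersDiagram I) s

def isc : IsColimit (((evaluation _ _).obj M).mapCocone (colimit.cocone (dg I s))) :=
  isColimitOfPreserves _ (colimit.isColimit (dg I s))

abbrev LC : ModuleCat.{u} A := (localCohomology I s).obj M

def cι (n : ℕ) : OldExt (q I n) M s ⟶ LC I s M :=
  (colimit.ι (dg I s) (op (op n))).app M

lemma cι_w {n m : ℕ} (h : n ≤ m) (x : OldExt (q I n) M s) :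
    cι I s M m (((Ext A (ModuleCat.{u} A) s).map (qπ I h).op).app M x) = cι I s M n x := by
  have := colimit.w (dg I s) (homOfLE h).op.op
  exact congr(($(this).app M) x)

def DtoLC : D I s M →ₗ[A] LC I s M :=
  Module.DirectLimit.lift A ℕ _ _
    (fun n => (cι I s M n).hom ∘ₗ (cmp (projectiveResolution (q I n)) s M).toLinearMap)
    (by
      intro n m h x
      simp only [LinearMap.comp_apply, tr_apply]
      have := cmp_natural (Y := M) (projectiveResolution (q I n)) (projectiveResolution (q I m)) (qπ I h) s x
      exact (congrArg (cι I s M m).hom this).symm.trans (cι_w I s M h _))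

lemma DtoLC_of (n x) : DtoLC I s M (Module.DirectLimit.of A ℕ _ _ n x) =
   cι I s M n (cmp (projectiveResolution (q I n)) s M x) := by
  exact Module.DirectLimit.lift_of _ _ _

instance : IsFiltered ℕᵒᵖᵒᵖ := IsFiltered.of_equivalence (opOpEquivalence ℕ).symm

instance : PreservesFilteredColimitsOfSize.{0, 0} (forget (ModuleCat.{u} A)) :=
  preservesFilteredColimitsOfSize_shrink.{0, u, 0, u} _

instance : PreservesColimitsOfShape ℕᵒᵖᵒᵖ (forget (ModuleCat.{u} A)) :=
  PreservesFilteredColimitsOfSize.preserves_filtered_colimits _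

lemma DtoLC_bij : Function.Bijective (DtoLC I s M) := by
  constructor
  · rw [injective_iff_map_eq_zero]
    intro z hz
    obtain ⟨n, x, rfl⟩ := Module.DirectLimit.exists_of z
    rw [DtoLC_of] at hz
    have hz' : cι I s M n (cmp (projectiveResolution (q I n)) s M x) = cι I s M n 0 := by
      rw [hz, map_zero]
    obtain ⟨k, f, g, hk⟩ := Concrete.isColimit_exists_of_rep_eq _ (isc I s M)
      (i := op (op n)) (j := op (op n)) _ _ hz'
    obtain ⟨⟨m⟩⟩ := k
    have h : n ≤ m := leOfHom f.unop.unop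
    have hk' : ((Ext A (ModuleCat.{u} A) s).map (qπ I h).op).app M
      (cmp (projectiveResolution (q I n)) s M x) = 0 := hk.trans (map_zero _)
    rw [cmp_natural (projectiveResolution (q I n)) (projectiveResolution (q I m)),
      LinearEquiv.map_eq_zero_iff] at hk'
    rw [← Module.DirectLimit.of_f (hij := h), tr_apply, hk', map_zero]
  · intro z
    obtain ⟨k, y, hy⟩ := Concrete.isColimit_exists_rep _ (isc I s M) z
    obtain ⟨⟨n⟩⟩ := k
    refine ⟨Module.DirectLimit.of A ℕ _ _ n ((cmp (projectiveResolution (q I n)) s M).symm y), ?_⟩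
    rw [DtoLC_of]
    exact (congrArg (cι I s M n).hom (LinearEquiv.apply_symm_apply
      (cmp (projectiveResolution (q I n)) s M) y)).trans hy

def DequivLC : D I s M ≃ₗ[A] LC I s M := LinearEquiv.ofBijective _ (DtoLC_bij I s M)

end dl
end LCP

namespace LCP

open Limits Opposite

section les
variable {A : Type u} [CommRing A] (I : Ideal A) (s : ℕ)

def Dpost {M M' : ModuleCat.{u} A} {s a s' : ℕ} (e : Abelian.Ext M M' a) (h : s + a = s') :
    D I s M →ₗ[A] D I s' M' :=
  Module.DirectLimit.map
    (fun n => (Abelian.Ext.bilinearCompOfLinear A (q I n) M M' s a s' h).flip e)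
    (by
      intro n m hnm
      ext x
      change ((Abelian.Ext.mk₀ (qπ I hnm)).comp x (zero_add s)).comp e h =
        (Abelian.Ext.mk₀ (qπ I hnm)).comp (x.comp e h) (zero_add s')
      rw [Abelian.Ext.comp_assoc _ _ _ _ _ (by omega)])

abbrev dof (M : ModuleCat.{u} A) (n : ℕ) (x : EX I s M n) : D I s M :=
  Module.DirectLimit.of A ℕ (EX I s M) (tr I s M) n x

lemma Dpost_of {M M' : ModuleCat.{u} A} {s a s' : ℕ} (e : Abelian.Ext M M' a) (h : s + a = s')
    (n : ℕ) (x : EX I s M n) :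
    Dpost I e h (dof I s M n x) = dof I s' M' n (x.comp e h) :=
  Module.DirectLimit.map_apply_of _ _ _

lemma dof_rep {M : ModuleCat.{u} A} (z : D I s M) : ∃ n x, dof I s M n x = z :=
  Module.DirectLimit.exists_of z

lemma dof_tr {M : ModuleCat.{u} A} (n m : ℕ) (h : n ≤ m) (x : EX I s M n) :
    dof I s M m (tr I s M n m h x) = dof I s M n x :=
  Module.DirectLimit.of_f

lemma dof_zero {M : ModuleCat.{u} A} (n : ℕ) (x : EX I s M n) (hx : dof I s M n x = 0) :
    ∃ m, ∃ h : n ≤ m, tr I s M n m h x = 0 :=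
  Module.DirectLimit.of.zero_exact hx

variable {S : ShortComplex (ModuleCat.{u} A)} (hS : S.ShortExact)

include hS in
lemma ker_δ : LinearMap.ker (Dpost I hS.extClass (rfl : s + 1 = s + 1)) =
    LinearMap.range (Dpost I (Abelian.Ext.mk₀ S.g) (add_zero s)) := by
  ext z
  constructor
  · intro hz
    rw [LinearMap.mem_ker] at hz
    obtain ⟨n, x, rfl⟩ := dof_rep I _ z
    rw [Dpost_of] at hz
    obtain ⟨m, h, hm⟩ := dof_zero _ _ _ _ hz
    rw [tr_apply, ← Abelian.Ext.comp_assoc _ _ _ (zero_add s) _ (by omega)] at hm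
    obtain ⟨y, hy⟩ := Abelian.Ext.covariant_sequence_exact₃ _ hS _ _ hm
    refine ⟨dof I s _ m y, ?_⟩
    rw [Dpost_of, hy, ← tr_apply, dof_tr]
  · rintro ⟨z, rfl⟩
    obtain ⟨n, x, rfl⟩ := dof_rep I _ z
    rw [LinearMap.mem_ker]
    rw [Dpost_of, Dpost_of]
    rw [Abelian.Ext.comp_assoc _ _ _ _ (zero_add 1) (by omega)]
    rw [hS.comp_extClass, Abelian.Ext.comp_zero, dof, map_zero]

include hS in
lemma δ_surj (hV : ∀ n, Subsingleton (EX I (s + 1) S.X₂ n)) :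
    Function.Surjective (Dpost I hS.extClass (rfl : s + 1 = s + 1)) := by
  intro z
  obtain ⟨n, x, rfl⟩ := dof_rep I _ z
  obtain ⟨y, hy⟩ := Abelian.Ext.covariant_sequence_exact₁ _ hS x (Subsingleton.elim _ _) rfl
  exact ⟨dof I s _ n y, by rw [Dpost_of, hy]⟩

include hS in
lemma shiftEquiv (hV : ∀ n, Subsingleton (EX I (s + 1) S.X₂ n))
    (hV' : ∀ n, Subsingleton (EX I s S.X₂ n)) :
    Nonempty (D I s S.X₃ ≃ₗ[A] D I (s + 1) S.X₁) := by
  refine ⟨LinearEquiv.ofBijective (Dpost I hS.extClass (rfl : s + 1 = s + 1)) ⟨?_, δ_surj I s hS hV⟩⟩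
  rw [← LinearMap.ker_eq_bot, ker_δ, eq_bot_iff]
  rintro _ ⟨z, rfl⟩
  obtain ⟨n, x, rfl⟩ := dof_rep I _ z
  rw [Subsingleton.elim x 0]
  simp

/-- torsion -/
def tors (M : Type*) [AddCommGroup M] [Module A M] : Submodule A M where
  carrier := {m | ∃ n, ∀ a ∈ I ^ n, a • m = 0}
  zero_mem' := ⟨0, by simp⟩
  add_mem' := by
    rintro x y ⟨n, hn⟩ ⟨m, hm⟩
    refine ⟨max n m, fun a ha => ?_⟩
    rw [smul_add, hn a (Ideal.pow_le_pow_right (le_max_left _ _) ha),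
      hm a (Ideal.pow_le_pow_right (le_max_right _ _) ha), add_zero]
  smul_mem' := by
    rintro c x ⟨n, hn⟩
    exact ⟨n, fun a ha => by rw [smul_comm, hn a ha, smul_zero]⟩

lemma mem_tors {M : Type*} [AddCommGroup M] [Module A M] {m : M} :
  m ∈ tors I M ↔ ∃ n, ∀ a ∈ I ^ n, a • m = 0 := Iff.rfl

def q1 (n : ℕ) : q I n := (Submodule.Quotient.mk (1 : A) : A ⧸ I ^ n)

lemma qπ_q1 {n m : ℕ} (h : n ≤ m) : qπ I h (q1 I m) = q1 I n := rfl

def ev0 (M : ModuleCat.{u} A) (n : ℕ) : EX I 0 M n →ₗ[A] M where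
  toFun x := (Abelian.Ext.linearEquiv₀ (R := A) x).hom (q1 I n)
  map_add' x y := by simp
  map_smul' r x := by simp

lemma ev0_mk₀ {M : ModuleCat.{u} A} (n : ℕ) (f : q I n ⟶ M) :
    ev0 I M n (Abelian.Ext.mk₀ f) = f (q1 I n) := by
  have : Abelian.Ext.linearEquiv₀ (R := A) (Abelian.Ext.mk₀ f) = f :=
    Abelian.Ext.linearEquiv₀.apply_symm_apply f
  simp only [ev0, LinearMap.coe_mk, AddHom.coe_mk, this]

def D0toM (M : ModuleCat.{u} A) : D I 0 M →ₗ[A] M :=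
  Module.DirectLimit.lift A ℕ _ _ (ev0 I M) (by
    intro n m h x
    obtain ⟨f, rfl⟩ := (Abelian.Ext.mk₀_bijective _ _).2 x
    rw [tr_apply, Abelian.Ext.mk₀_comp_mk₀, ev0_mk₀, ev0_mk₀]
    rfl)

lemma D0toM_of (M : ModuleCat.{u} A) (n : ℕ) (f : q I n ⟶ M) :
    D0toM I M (dof I 0 M n (Abelian.Ext.mk₀ f)) = f (q1 I n) := by
  rw [← ev0_mk₀]
  exact Module.DirectLimit.lift_of _ _ _

lemma D0_rep {M : ModuleCat.{u} A} (z : D I 0 M) :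
   ∃ (n : ℕ) (f : q I n ⟶ M), dof I 0 M n (Abelian.Ext.mk₀ f) = z := by
  obtain ⟨n, x, rfl⟩ := dof_rep I _ z
  obtain ⟨f, rfl⟩ := (Abelian.Ext.mk₀_bijective _ _).2 x
  exact ⟨n, f, rfl⟩

lemma D0toM_inj (M : ModuleCat.{u} A) : Function.Injective (D0toM I M) := by
  rw [injective_iff_map_eq_zero]
  intro z hz
  obtain ⟨n, f, rfl⟩ := D0_rep I z
  rw [D0toM_of] at hz
  have : f = 0 := by
    ext x
    obtain ⟨a, rfl⟩ := Submodule.Quotient.mk_surjective (I ^ n) x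
    have h1 : (Submodule.Quotient.mk a : A ⧸ I ^ n) = a • Submodule.Quotient.mk 1 := by
      rw [← Submodule.Quotient.mk_smul, smul_eq_mul, mul_one]
    rw [h1]
    exact (map_smul f.hom a (q1 I n)).trans ((congrArg (a • ·) hz).trans (smul_zero a))
  rw [this]; simp

lemma D0toM_range (M : ModuleCat.{u} A) : LinearMap.range (D0toM I M) = tors I M := by
  ext x
  constructor
  · rintro ⟨z, rfl⟩
    obtain ⟨n, f, rfl⟩ := D0_rep I z
    rw [D0toM_of]
    refine ⟨n, fun a ha => ?_⟩
    refine (map_smul f.hom a (q1 I n)).symm.trans ?_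
    have : a • q1 I n = 0 := by
      change (Submodule.Quotient.mk (a • 1) : A ⧸ I ^ n) = 0
      rw [Submodule.Quotient.mk_eq_zero]; simpa using ha
    rw [this, map_zero]
  · rintro ⟨n, hn⟩
    let f : q I n ⟶ M := ModuleCat.ofHom (Submodule.liftQ (I ^ n) (LinearMap.toSpanSingleton A M x)
      (fun a ha => hn a ha))
    refine ⟨dof I 0 M n (Abelian.Ext.mk₀ f), ?_⟩
    rw [D0toM_of]
    change LinearMap.toSpanSingleton A M x 1 = x
    simp

lemma D0toM_nat {M M' : ModuleCat.{u} A} (g : M ⟶ M') (z : D I 0 M) :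
    D0toM I M' (Dpost I (Abelian.Ext.mk₀ g) (add_zero 0) z) = g (D0toM I M z) := by
  obtain ⟨n, f, rfl⟩ := D0_rep I z
  rw [Dpost_of, Abelian.Ext.mk₀_comp_mk₀, D0toM_of, D0toM_of]
  rfl

def D0equiv (M : ModuleCat.{u} A) : D I 0 M ≃ₗ[A] tors I M :=
  LinearEquiv.ofInjective (D0toM I M) (D0toM_inj I M) ≪≫ₗ LinearEquiv.ofEq _ _ (D0toM_range I M)

lemma D0equiv_coe (M : ModuleCat.{u} A) (z) : (D0equiv I M z : M) = D0toM I M z := rfl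

include hS in
lemma exists_δ0 (hV : ∀ n, Subsingleton (EX I 1 S.X₂ n)) :
    ∃ δ : tors I S.X₃ →ₗ[A] D I 1 S.X₁, Function.Surjective δ ∧
      ∀ x, δ x = 0 ↔ ∃ y ∈ tors I S.X₂, S.g y = x.1 := by
  refine ⟨Dpost I hS.extClass (rfl : 0 + 1 = 1) ∘ₗ (D0equiv I S.X₃).symm.toLinearMap,
    (δ_surj I 0 hS hV).comp (LinearEquiv.surjective _), fun x => ?_⟩
  have h := ker_δ I 0 hS
  rw [LinearMap.comp_apply, ← LinearMap.mem_ker, h]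
  constructor
  · rintro ⟨z, hz⟩
    refine ⟨D0toM I _ z, by rw [← D0toM_range]; exact ⟨z, rfl⟩, ?_⟩
    rw [← D0toM_nat, hz, ← D0equiv_coe]
    simp
  · rintro ⟨y, hy, hyx⟩
    rw [← D0toM_range] at hy
    obtain ⟨z, rfl⟩ := hy
    refine ⟨z, ?_⟩
    apply D0toM_inj
    rw [D0toM_nat, hyx, ← D0equiv_coe]
    simp

lemma V_inj (M : ModuleCat.{u} A) [Injective M] (n : ℕ) : Subsingleton (EX I (s + 1) M n) :=
  subsingleton_of_forall_eq 0 (fun x => Abelian.Ext.eq_zero_of_injective x)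

lemma V_unit (M : ModuleCat.{u} A) (t : A) (ht : t ∈ I) (hb : Function.Bijective (fun m : M => t • m))
    (n : ℕ) : Subsingleton (EX I s M n) := by
  refine subsingleton_of_forall_eq 0 (fun x => ?_)
  have h0 : t ^ n • x = 0 := by
    have : t ^ n • 𝟙 (q I n) = 0 := by
      ext y
      obtain ⟨a, rfl⟩ := Submodule.Quotient.mk_surjective (I ^ n) y
      change (Submodule.Quotient.mk (t ^ n • a) : A ⧸ I ^ n) = 0
      rw [Submodule.Quotient.mk_eq_zero]
      exact Ideal.mul_mem_right _ _ (Ideal.pow_mem_pow ht n)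
    rw [← Abelian.Ext.mk₀_id_comp x, ← Abelian.Ext.smul_comp, ← Abelian.Ext.mk₀_smul, this]
    simp
  have hu : IsUnit (algebraMap A (Module.End A M) t) := (Module.End.isUnit_iff _).2 hb
  have hinj : ∀ y : EX I s M n, t • y = 0 → y = 0 := by
    intro y hy
    obtain ⟨v, hv⟩ := hu.exists_right_inv
    have h1 : (t • 𝟙 M) ≫ ModuleCat.ofHom v = 𝟙 M := by
      rw [Linear.smul_comp, Category.id_comp]
      ext m
      exact congr($hv m)
    rw [Abelian.Ext.smul_eq_comp_mk₀] at hy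
    have h2 : (y.comp (Abelian.Ext.mk₀ (t • 𝟙 M)) (add_zero _)).comp
      (Abelian.Ext.mk₀ (ModuleCat.ofHom v)) (add_zero _) = y := by
      rw [Abelian.Ext.comp_assoc_of_third_deg_zero, Abelian.Ext.mk₀_comp_mk₀, h1,
        Abelian.Ext.comp_mk₀_id]
    rw [← h2, hy]; simp
  have : ∀ k, t ^ k • x = 0 → x = 0 := by
    intro k
    induction k with
    | zero => simp
    | succ k ih =>
      intro h
      rw [pow_succ', mul_smul] at h
      exact ih (hinj _ h)
  exact this n h0
end les
end LCP

namespace LCP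

open Limits Opposite
open Polynomial (X C)

section sh
set_option linter.unusedSectionVars false
variable {R : Type u} [CommRing R]

/-- build a polynomial-linear map -/
def mkL {P Q : Type*} [AddCommGroup P] [AddCommGroup Q] [Module (Polynomial R) P]
    [Module (Polynomial R) Q] (f : P →+ Q) (hC : ∀ (r : R) p, f ((C r : Polynomial R) • p) = (C r : Polynomial R) • f p)
    (hX : ∀ p, f ((X : Polynomial R) • p) = (X : Polynomial R) • f p) : P →ₗ[Polynomial R] Q where
  toFun := f
  map_add' := f.map_add
  map_smul' := by
    intro a
    induction a using Polynomial.induction_on' with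
    | add a b ha hb =>
      intro p
      simp only [RingHom.id_apply] at *
      rw [add_smul, add_smul, map_add, ha, hb]
    | monomial n r =>
      intro p
      simp only [RingHom.id_apply] at *
      rw [← Polynomial.C_mul_X_pow_eq_monomial, mul_smul, mul_smul, hC]
      congr 1
      induction n generalizing p with
      | zero => simp
      | succ n ih => rw [pow_succ, mul_smul, mul_smul, ih, hX]

/-- functions of finite support with `X` acting by pullback along `g` -/
def Sh (_R : Type u) {α : Type} (_g : α ↪ α) (M : Type u) [AddCommGroup M] : Type u := α →₀ M

variable {α : Type} {g : α ↪ α} {M M' M'' : Type u} [AddCommGroup M] [Module R M]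
  [AddCommGroup M'] [Module R M'] [AddCommGroup M''] [Module R M'']

namespace Sh
instance : AddCommGroup (Sh R g M) := inferInstanceAs (AddCommGroup (α →₀ M))

instance : FunLike (Sh R g M) α M := inferInstanceAs (FunLike (α →₀ M) α M)

@[ext] lemma ext {f f' : Sh R g M} (h : ∀ k, f k = f' k) : f = f' := Finsupp.ext h

@[simp] lemma add_apply (f f' : Sh R g M) (k : α) : (f + f') k = f k + f' k := rfl
@[simp] lemma zero_apply (k : α) : (0 : Sh R g M) k = 0 := rfl

def toF (f : Sh R g M) : α →₀ M := f
def ofF (f : α →₀ M) : Sh R g M := f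

variable (R g M) in
def shift : (α →₀ M) →ₗ[R] (α →₀ M) := Finsupp.lcomapDomain g g.injective

instance : Module (Polynomial R) (Sh R g M) :=
  inferInstanceAs (Module (Polynomial R) (Module.AEval' (shift R g M)))

@[simp] lemma C_smul_apply (r : R) (f : Sh R g M) (k : α) : ((C r : Polynomial R) • f) k = r • f k := by
  have : (C r : Polynomial R) • f = ofF (r • f.toF) :=
    Module.AEval.C_smul (M := α →₀ M) (a := shift R g M) r f
  rw [this]; rfl

@[simp] lemma X_smul_apply (f : Sh R g M) (k : α) : ((X : Polynomial R) • f) k = f (g k) := by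
  have : (X : Polynomial R) • f = ofF (shift R g M f.toF) :=
    Module.AEval.X_smul_of (M := α →₀ M) (a := shift R g M) f
  rw [this]; rfl

@[simp] lemma toF_apply (f : Sh R g M) (k : α) : f.toF k = f k := rfl
@[simp] lemma ofF_apply (f : α →₀ M) (k : α) : (ofF f : Sh R g M) k = f k := rfl

def map (l : M →ₗ[R] M') : Sh R g M →ₗ[Polynomial R] Sh R g M' :=
  mkL (Finsupp.mapRange.addMonoidHom l.toAddMonoidHom : (α →₀ M) →+ (α →₀ M'))
   (by
    intro r f; ext k
    rw [C_smul_apply]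
    change l (((C r : Polynomial R) • f) k) = r • l (f k)
    simp)
   (by
    intro f; ext k
    rw [X_smul_apply]
    change l (((X : Polynomial R) • f) k) = l (f (g k))
    simp)

@[simp] lemma map_apply (l : M →ₗ[R] M') (f : Sh R g M) (k : α) : map l f k = l (f k) := rfl

lemma map_inj {l : M →ₗ[R] M'} (h : Function.Injective l) :
    Function.Injective (map (g := g) l) := by
  intro f f' e
  ext k
  exact h congr($e k)

lemma map_surj {l : M →ₗ[R] M'} (h : Function.Surjective l) :
    Function.Surjective (map (g := g) l) :=
  Finsupp.mapRange_surjective l l.map_zero h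

lemma map_exact {l : M →ₗ[R] M'} {l' : M' →ₗ[R] M''} (h : Function.Exact l l') :
    Function.Exact (map (g := g) l) (map (g := g) l') := by
  intro f
  constructor
  · intro hf
    have h1 : ∀ k, f k ∈ LinearMap.range l := fun k => (h _).1 congr($hf k)
    let f' : Sh R g (LinearMap.range l) := ofF (Finsupp.onFinset f.toF.support (fun k => ⟨f k, h1 k⟩)
      (by
        intro k hk
        rw [Finsupp.mem_support_iff]
        intro h0; apply hk
        exact Subtype.ext h0))
    obtain ⟨y, hy⟩ := map_surj (g := g) (LinearMap.surjective_rangeRestrict l) f'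
    refine ⟨y, ?_⟩
    ext k
    exact congr(($hy k : LinearMap.range l).1)
  · rintro ⟨y, rfl⟩
    ext k
    exact (h _).2 ⟨_, rfl⟩

def congr (e : M ≃ₗ[R] M') : Sh R g M ≃ₗ[Polynomial R] Sh R g M' :=
  LinearEquiv.ofBijective (map e.toLinearMap) ⟨map_inj e.injective, map_surj e.surjective⟩

@[simp] lemma congr_apply (e : M ≃ₗ[R] M') (f : Sh R g M) (k : α) : congr e f k = e (f k) := rfl
end Sh

def succE : ℕ ↪ ℕ := ⟨Nat.succ, Nat.succ_injective⟩
def predE : ℤ ↪ ℤ := ⟨fun k => k - 1, fun a b h => by simpa using h⟩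

abbrev Inv (R : Type u) (M : Type u) [AddCommGroup M] : Type u := Sh R succE M
abbrev Lau (R : Type u) (M : Type u) [AddCommGroup M] : Type u := Sh R predE M

lemma Inv.Xpow (f : Inv R M) (n k : ℕ) : ((X ^ n : Polynomial R) • f) k = f (k + n) := by
  induction n generalizing k with
  | zero => simp
  | succ n ih =>
    rw [pow_succ', mul_smul, Sh.X_smul_apply, ih]
    congr 1
    change k + 1 + n = _
    omega

lemma Inv.bdd (f : Inv R M) : ∃ n, ∀ k, n ≤ k → f k = 0 := by
  refine ⟨f.toF.support.sup id + 1, fun k hk => ?_⟩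
  by_contra h
  have := Finset.le_sup (f := id) (s := f.toF.support) (Finsupp.mem_support_iff.2 h)
  simp only [id] at this
  omega

lemma extend {E Y Z : Type u} [AddCommGroup E] [Module R E] [AddCommGroup Y] [Module R Y]
    [AddCommGroup Z] [Module R Z] [Module.Injective R E] (i : Y →ₗ[R] Z) (l : Y →ₗ[R] E)
    (h : ∀ y, i y = 0 → l y = 0) : ∃ h : Z →ₗ[R] E, ∀ y, h (i y) = l y := by
  obtain ⟨k, hk⟩ := Module.Injective.out ((LinearMap.ker i).liftQ i le_rfl)
    (LinearMap.ker_eq_bot.1 (Submodule.ker_liftQ_eq_bot _ _ _ le_rfl))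
    ((LinearMap.ker i).liftQ l (fun y hy => h y hy))
  exact ⟨k, fun y => hk (Submodule.Quotient.mk y)⟩

theorem inv_baer [IsNoetherianRing R] (E : Type u) [AddCommGroup E] [Module R E] [Module.Injective R E] :
    Module.Baer (Polynomial R) (Inv R E) := by
  intro I f
  -- bound on f
  obtain ⟨n, hn⟩ : ∃ n, ∀ y, (X ^ n : Polynomial R) • f y = 0 := by
    have hst := monotone_stabilizes_iff_noetherian.2 (inferInstance : IsNoetherian (Polynomial R) I)
    let F : ℕ →o Submodule (Polynomial R) I := ⟨fun n => LinearMap.ker ((X ^ n : Polynomial R) • f), by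
      refine monotone_nat_of_le_succ (fun n y hy => ?_)
      rw [LinearMap.mem_ker, LinearMap.smul_apply] at *
      rw [pow_succ', mul_smul, hy, smul_zero]⟩
    obtain ⟨n, hn⟩ := hst F
    refine ⟨n, fun y => ?_⟩
    obtain ⟨m, hm⟩ := (f y).bdd
    have : y ∈ F (max n m) := by
      change ((X ^ (max n m) : Polynomial R) • f) y = 0
      ext k
      rw [LinearMap.smul_apply, Inv.Xpow]
      exact hm _ (by omega)
    rw [← hn _ (le_max_left _ _)] at this
    exact this
  obtain ⟨m, hm⟩ : ∃ m : ℕ, ∀ y : I, (y : Polynomial R) ∈ Ideal.span {(X ^ m : Polynomial R)} → f y = 0 := by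
    obtain ⟨k, hk⟩ := Ideal.exists_pow_inf_eq_pow_smul (Ideal.span {(X : Polynomial R)}) I
    refine ⟨n + k, fun y hy => ?_⟩
    have h1 : (y : Polynomial R) ∈ (Ideal.span {(X : Polynomial R)}) ^ (n + k) • (⊤ : Submodule (Polynomial R) (Polynomial R)) ⊓ I := by
      refine ⟨?_, y.2⟩
      rw [Ideal.span_singleton_pow]
      simpa using hy
    rw [hk _ (by omega), Nat.add_sub_cancel, Ideal.span_singleton_pow,
      Submodule.ideal_span_singleton_smul] at h1
    obtain ⟨z, hz, hzy⟩ := h1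
    have : y = (X ^ n : Polynomial R) • (⟨z, hz.2⟩ : I) := Subtype.ext hzy.symm
    rw [this, map_smul, hn]
  let l : I →ₗ[R] E :=
    { toFun := fun y => f y 0
      map_add' := by intro a b; simp
      map_smul' := by
        intro r y
        have : r • y = (C r : Polynomial R) • y := Subtype.ext (by simp [Polynomial.smul_eq_C_mul])
        rw [this, map_smul]; simp }
  obtain ⟨h', hh'⟩ := extend
    (((Ideal.span {(X ^ m : Polynomial R)}).mkQ.restrictScalars R) ∘ₗ (I.subtype.restrictScalars R)) l (by
      intro y hy
      have : f y = 0 := hm y ((Submodule.Quotient.mk_eq_zero _).1 hy)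
      change f y 0 = 0
      rw [this]; rfl)
  let h : Polynomial R →ₗ[R] E := h' ∘ₗ ((Ideal.span {(X ^ m : Polynomial R)}).mkQ.restrictScalars R)
  have hh : ∀ y : I, h y = f y 0 := hh'
  have hX : ∀ p, h (X ^ m * p) = 0 := by
    intro p
    have : ((Ideal.span {(X ^ m : Polynomial R)}).mkQ.restrictScalars R) (X ^ m * p) = 0 :=
      (Submodule.Quotient.mk_eq_zero _).2 (Ideal.mul_mem_right _ _ (Ideal.mem_span_singleton_self _))
    change h' (((Ideal.span {(X ^ m : Polynomial R)}).mkQ.restrictScalars R) (X ^ m * p)) = 0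
    rw [this, map_zero]
  let e : Inv R E := Sh.ofF (Finsupp.onFinset (Finset.range m) (fun k => h (X ^ k)) (by
    intro k hk
    rw [Finset.mem_range]
    by_contra hlt
    apply hk
    rw [← Nat.add_sub_of_le (not_lt.1 hlt), pow_add, hX]))
  have he : ∀ (p : Polynomial R) (k : ℕ), (p • e) k = h (X ^ k * p) := by
    intro p
    induction p using Polynomial.induction_on' with
    | add a b ha hb => intro k; rw [add_smul, Sh.add_apply, ha, hb, mul_add, map_add]
    | monomial n r =>
      intro k
      rw [← Polynomial.C_mul_X_pow_eq_monomial, mul_smul, Sh.C_smul_apply, Inv.Xpow]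
      change r • h (X ^ (k + n)) = _
      rw [← map_smul, Polynomial.smul_eq_C_mul, pow_add]
      congr 1; ring
  refine ⟨LinearMap.toSpanSingleton _ _ e, fun y hy => ?_⟩
  ext k
  rw [LinearMap.toSpanSingleton_apply, he]
  have := hh ((X ^ k : Polynomial R) • (⟨y, hy⟩ : I))
  rw [map_smul, Inv.Xpow, zero_add] at this
  exact this

lemma inv_injective [IsNoetherianRing R] (E : Type u) [AddCommGroup E] [Module R E] [Module.Injective R E] :
    Injective (ModuleCat.of (Polynomial R) (Inv R E)) := by
  have := (inv_baer (R := R) E).injective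
  exact Module.injective_object_of_injective_module _ _
end sh
end LCP

namespace LCP

open Limits Opposite
open Polynomial (X C)

section main
set_option linter.unusedSectionVars false
variable {R : Type u} [CommRing R] (J : Ideal R)

abbrev Jt : Ideal (Polynomial R) := Ideal.map Polynomial.C J ⊔ Ideal.span {Polynomial.X}

lemma tors_inv {M : Type u} [AddCommGroup M] [Module R M] (f : Inv R M) :
    f ∈ tors (Jt J) (Inv R M) ↔ ∀ k, f k ∈ tors J M := by
  constructor
  · rintro ⟨n, hn⟩ k
    refine ⟨n, fun a ha => ?_⟩
    have h1 : (C a : Polynomial R) ∈ (Jt J) ^ n := by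
      have : C a ∈ Ideal.map (Polynomial.C) (J ^ n) := Ideal.mem_map_of_mem _ ha
      rw [Ideal.map_pow] at this
      exact Ideal.pow_right_mono le_sup_left n this
    have := congr($(hn _ h1) k)
    simpa using this
  · intro hf
    choose n hn using hf
    obtain ⟨m, hm⟩ := f.bdd
    let N := (Finset.range m).sup n
    refine ⟨N + m, ?_⟩
    have key : (Jt J) ^ (N + m) ≤ LinearMap.ker (LinearMap.toSpanSingleton (Polynomial R) _ f) := by
      refine Ideal.sup_pow_add_le_pow_sup_pow.trans (sup_le ?_ ?_)
      · rw [← Ideal.map_pow, Ideal.map_le_iff_le_comap]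
        intro a ha
        change (C a : Polynomial R) • f = 0
        ext k
        rw [Sh.C_smul_apply, Sh.zero_apply]
        by_cases hk : k < m
        · exact hn k a (Ideal.pow_le_pow_right (Finset.le_sup (Finset.mem_range.2 hk)) ha)
        · rw [hm k (by omega), smul_zero]
      · rw [Ideal.span_singleton_pow, Ideal.span_singleton_le_iff_mem]
        change (X ^ m : Polynomial R) • f = 0
        ext k
        rw [Inv.Xpow, Sh.zero_apply, hm _ (by omega)]
    intro a ha
    exact key ha

def torsEquiv (M : Type u) [AddCommGroup M] [Module R M] :
    Inv R (tors J M) ≃ₗ[Polynomial R] tors (Jt J) (Inv R M) :=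
  LinearEquiv.ofInjective (Sh.map (tors J M).subtype) (Sh.map_inj Subtype.val_injective) ≪≫ₗ
    LinearEquiv.ofEq _ _ (by
      have hex : Function.Exact (tors J M).subtype (tors J M).mkQ := LinearMap.exact_subtype_mkQ _
      have := (LinearMap.exact_iff.1 (Sh.map_exact (g := succE) hex)).symm
      rw [this]
      ext f
      rw [tors_inv, LinearMap.mem_ker]
      constructor
      · intro h k
        have := congr($h k)
        simpa using this
      · intro h
        ext k
        simpa using h k)

@[simp] lemma torsEquiv_coe (M : Type u) [AddCommGroup M] [Module R M] (f : Inv R (tors J M)) (k : ℕ) :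
    (torsEquiv J M f : Inv R M) k = f k := rfl

lemma exists_ses (N : Type u) [AddCommGroup N] [Module R N] :
    ∃ (E C : Type u) (_ : AddCommGroup E) (_ : AddCommGroup C) (_ : Module R E) (_ : Module R C)
      (f : N →ₗ[R] E) (g : E →ₗ[R] C), Module.Injective R E ∧ Function.Injective f ∧
        Function.Surjective g ∧ Function.Exact f g := by
  have : EnoughInjectives (ModuleCat.{u} R) := ModuleCat.enoughInjectives.{u, u} R
  let E := Injective.under (ModuleCat.of R N)
  let f : N →ₗ[R] E := (Injective.ι (ModuleCat.of R N)).hom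
  have hE : Injective (ModuleCat.of R E) := inferInstanceAs (Injective E)
  refine ⟨E, E ⧸ LinearMap.range f, inferInstance, inferInstance, inferInstance, inferInstance, f,
    (LinearMap.range f).mkQ, Module.injective_module_of_injective_object R E,
    (ModuleCat.mono_iff_injective (Injective.ι (ModuleCat.of R N))).1 inferInstance,
    Submodule.mkQ_surjective _, LinearMap.exact_map_mkQ_range f⟩

section
variable {A : Type u} [CommRing A] {N E C : Type u} [AddCommGroup N] [AddCommGroup E] [AddCommGroup C]
  [Module A N] [Module A E] [Module A C] {f : N →ₗ[A] E} {g : E →ₗ[A] C}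

lemma mkSES (hi : Function.Injective f) (hs : Function.Surjective g)
    (he : Function.Exact f g) :
    (ModuleCat.shortComplexOfCompEqZero f g he.linearMap_comp_eq_zero).ShortExact :=
  ModuleCat.shortComplex_shortExact _ he hi hs
end

abbrev DD {A : Type u} [CommRing A] (I : Ideal A) (s : ℕ) (M : Type u) [AddCommGroup M] [Module A M] :
    Type u := D I s (ModuleCat.of A M)

variable [IsNoetherianRing R]

lemma inv1 (N : Type u) [AddCommGroup N] [Module R N] :
    Nonempty (DD (Jt J) 1 (Inv R N) ≃ₗ[Polynomial R] Inv R (DD J 1 N)) := by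
  obtain ⟨E, Q, _, _, _, _, f, g, hE, hf, hg, hfg⟩ := exists_ses (R := R) N
  have hE' : Injective (ModuleCat.of R E) := Module.injective_object_of_injective_module R E
  have hE2 := inv_injective (R := R) E
  obtain ⟨δ, hδ, hk⟩ := exists_δ0 J (mkSES hf hg hfg) (V_inj J 0 (ModuleCat.of R E))
  obtain ⟨δ', hδ', hk'⟩ := exists_δ0 (Jt J) (mkSES (Sh.map_inj (g := succE) hf) (Sh.map_surj hg) (Sh.map_exact hfg))
    (V_inj (Jt J) 0 (ModuleCat.of _ (Inv R E)))
  change tors J Q →ₗ[R] DD J 1 N at δ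
  change tors (Jt J) (Inv R Q) →ₗ[_] DD (Jt J) 1 (Inv R N) at δ'
  have hτ : ∀ y ∈ tors J E, g y ∈ tors J Q := by
    rintro y ⟨n, hn⟩
    exact ⟨n, fun a ha => by rw [← map_smul, hn a ha, map_zero]⟩
  let τ : tors J E →ₗ[R] tors J Q := g.restrict hτ
  have hex : Function.Exact τ δ := by
    intro x
    refine (hk x).trans ?_
    constructor
    · rintro ⟨y, hy, h⟩
      exact ⟨⟨y, hy⟩, Subtype.ext h⟩
    · rintro ⟨y, rfl⟩
      exact ⟨y.1, y.2, rfl⟩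
  have hex1 := LinearMap.exact_iff.1 (Sh.map_exact (g := succE) hex)
  let Δ : Inv R (tors J Q) →ₗ[Polynomial R] DD (Jt J) 1 (Inv R N) := δ' ∘ₗ (torsEquiv J Q).toLinearMap
  have hΔ : Function.Surjective Δ := hδ'.comp (torsEquiv J Q).surjective
  have hex2 : LinearMap.ker Δ = LinearMap.range (Sh.map (g := succE) τ) := by
    ext x
    refine (hk' (torsEquiv J Q x)).trans ?_
    constructor
    · rintro ⟨y, hy, h⟩
      obtain ⟨y', hy'⟩ := (torsEquiv J E).surjective ⟨y, hy⟩
      refine ⟨y', ?_⟩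
      ext k
      have h1 : (y' k : E) = (y : Inv R E) k := by rw [← torsEquiv_coe, hy']
      have h2 : g ((y : Inv R E) k) = x k := congr(($h : Inv R Q) k)
      change g (y' k : E) = x k
      rw [h1, h2]
    · rintro ⟨y, rfl⟩
      refine ⟨_, (torsEquiv J E y).2, ?_⟩
      exact Sh.ext (R := R) (g := succE) (M := Q) fun k => rfl
  exact ⟨(LinearMap.quotKerEquivOfSurjective Δ hΔ).symm ≪≫ₗ
    Submodule.quotEquivOfEq _ _ (hex2.trans hex1.symm) ≪≫ₗ
    LinearMap.quotKerEquivOfSurjective (Sh.map (g := succE) δ) (Sh.map_surj hδ)⟩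

lemma inv_all (s : ℕ) : ∀ (N : Type u) [AddCommGroup N] [Module R N],
    Nonempty (DD (Jt J) s (Inv R N) ≃ₗ[Polynomial R] Inv R (DD J s N)) := by
  induction s with
  | zero =>
    intro N _ _
    exact ⟨D0equiv (Jt J) (ModuleCat.of _ (Inv R N)) ≪≫ₗ (torsEquiv J N).symm ≪≫ₗ
      Sh.congr (D0equiv J (ModuleCat.of R N)).symm⟩
  | succ s ih =>
    intro N _ _
    rcases s with _ | s
    · exact inv1 J N
    obtain ⟨E, Q, _, _, _, _, f, g, hE, hf, hg, hfg⟩ := exists_ses (R := R) N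
    have hE' : Injective (ModuleCat.of R E) := Module.injective_object_of_injective_module R E
    have hE2 := inv_injective (R := R) E
    obtain ⟨e1⟩ := shiftEquiv J (s + 1) (mkSES hf hg hfg) (V_inj J _ (ModuleCat.of R E)) (V_inj J _ (ModuleCat.of R E))
    obtain ⟨e2⟩ := shiftEquiv (Jt J) (s + 1) (mkSES (Sh.map_inj (g := succE) hf) (Sh.map_surj hg) (Sh.map_exact hfg))
      (V_inj (Jt J) _ (ModuleCat.of _ (Inv R E))) (V_inj (Jt J) _ (ModuleCat.of _ (Inv R E)))
    obtain ⟨e3⟩ := ih Q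
    exact ⟨e2.symm ≪≫ₗ e3 ≪≫ₗ Sh.congr e1⟩

end main
end LCP

namespace LCP

open Limits Opposite
open Polynomial (X C)

section fin
set_option linter.unusedSectionVars false
variable {R : Type u} [CommRing R] (J : Ideal R) (N : Type u) [AddCommGroup N] [Module R N]

lemma pm_C (r : R) (p : PolynomialModule R N) (n : ℕ) :
    ((C r : Polynomial R) • p).coeff n = r • p.coeff n := by
  rw [PolynomialModule.smul_def, Polynomial.aeval_C]
  rfl

lemma pm_X (p : PolynomialModule R N) :
    ((X : Polynomial R) • p).coeff = Finsupp.mapDomain Nat.succ p.coeff := by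
  rw [PolynomialModule.smul_def, Polynomial.aeval_X]
  rfl

lemma pm_X_succ (p : PolynomialModule R N) (n : ℕ) :
    ((X : Polynomial R) • p).coeff (n + 1) = p.coeff n := by
  rw [pm_X]; exact Finsupp.mapDomain_apply Nat.succ_injective _ _

lemma pm_X_zero (p : PolynomialModule R N) :
    ((X : Polynomial R) • p).coeff 0 = 0 := by
  rw [pm_X]; exact Finsupp.mapDomain_of_notMem_range _ _ (by rintro ⟨n, hn⟩; exact Nat.succ_ne_zero _ hn)

def ι₀ (p : PolynomialModule R N) : Lau R N := Sh.ofF (Finsupp.mapDomain ((↑) : ℕ → ℤ) p.coeff)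

lemma ι₀_nat (p : PolynomialModule R N) (n : ℕ) : ι₀ N p (n : ℤ) = p.coeff n :=
  Finsupp.mapDomain_apply Nat.cast_injective _ _

lemma ι₀_neg (p : PolynomialModule R N) (k : ℤ) (hk : k < 0) : ι₀ N p k = 0 :=
  Finsupp.mapDomain_of_notMem_range _ _ (by rintro ⟨n, hn⟩; omega)

lemma ι₀_ext {f f' : Lau R N} (h : ∀ n : ℕ, f (n : ℤ) = f' n) (h' : ∀ k : ℤ, k < 0 → f k = f' k) :
    f = f' := by
  ext k
  rcases lt_or_ge k 0 with hk | hk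
  · exact h' k hk
  · obtain ⟨n, rfl⟩ := Int.eq_ofNat_of_zero_le hk
    exact h n

lemma predE_apply (k : ℤ) : predE k = k - 1 := rfl

def ιL : PolynomialModule R N →ₗ[Polynomial R] Lau R N :=
  mkL { toFun := ι₀ N
        map_zero' := by
          apply ι₀_ext
          · intro n; rw [ι₀_nat]; rfl
          · intro k hk; rw [ι₀_neg _ _ _ hk]; rfl
        map_add' := by
          intro p p'
          apply ι₀_ext
          · intro n; rw [Sh.add_apply, ι₀_nat, ι₀_nat, ι₀_nat]; rfl
          · intro k hk; rw [Sh.add_apply, ι₀_neg _ _ _ hk, ι₀_neg _ _ _ hk, ι₀_neg _ _ _ hk, add_zero] }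
    (by
      intro r p
      change ι₀ N _ = _ • ι₀ N _
      apply ι₀_ext
      · intro n; rw [Sh.C_smul_apply, ι₀_nat, ι₀_nat, pm_C]
      · intro k hk; rw [Sh.C_smul_apply, ι₀_neg _ _ _ hk, ι₀_neg _ _ _ hk, smul_zero])
    (by
      intro p
      change ι₀ N _ = _ • ι₀ N _
      apply ι₀_ext
      · intro n
        rw [Sh.X_smul_apply, ι₀_nat, predE_apply]
        rcases n with _ | n
        · rw [pm_X_zero, ι₀_neg _ _ _ (by simp)]
        · rw [pm_X_succ]
          have : ((n + 1 : ℕ) : ℤ) - 1 = n := by push_cast; ring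
          rw [this, ι₀_nat]
      · intro k hk
        rw [Sh.X_smul_apply, ι₀_neg _ _ _ hk, ι₀_neg _ _ _ (by rw [predE_apply]; omega)])

lemma ιL_apply (p : PolynomialModule R N) : ιL N p = ι₀ N p := rfl

lemma ιL_inj : Function.Injective (ιL (R := R) N) := by
  intro p p' h
  apply PolynomialModule.coeff_inj.1
  ext n
  rw [← ι₀_nat, ← ι₀_nat, ← ιL_apply, ← ιL_apply, h]

def negE (k : ℕ) : ℤ := -1 - k
lemma negE_inj : Function.Injective negE := by
  intro a b h; simp only [negE] at h; omega

def πL : Lau R N →ₗ[Polynomial R] Inv R N :=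
  mkL (Finsupp.comapDomain.addMonoidHom negE_inj : (ℤ →₀ N) →+ (ℕ →₀ N))
    (by
      intro r f; ext k
      rw [Sh.C_smul_apply]
      change ((C r : Polynomial R) • f) (negE k) = r • f (negE k)
      simp)
    (by
      intro f; ext k
      rw [Sh.X_smul_apply]
      change ((X : Polynomial R) • f) (negE k) = f (negE (k + 1))
      rw [Sh.X_smul_apply]
      congr 1
      simp only [predE_apply, negE]; push_cast; ring)

lemma πL_apply (f : Lau R N) (k : ℕ) : πL N f k = f (negE k) := rfl

lemma πL_surj : Function.Surjective (πL (R := R) N) :=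
  Finsupp.comapDomain_surjective negE_inj

lemma πL_exact : Function.Exact (ιL (R := R) N) (πL N) := by
  intro f
  constructor
  · intro h
    have h0 : ∀ k : ℤ, k < 0 → f k = 0 := by
      intro k hk
      have := congr($h (-1 - k).toNat)
      rw [πL_apply] at this
      have e : negE (-1 - k).toNat = k := by simp only [negE]; omega
      rwa [e] at this
    refine ⟨.ofCoeff R (Finsupp.comapDomain ((↑) : ℕ → ℤ) f.toF Nat.cast_injective.injOn), ?_⟩
    rw [ιL_apply]
    apply ι₀_ext
    · intro n; rw [ι₀_nat]; rfl
    · intro k hk; rw [ι₀_neg _ _ _ hk, h0 k hk]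
  · rintro ⟨p, rfl⟩
    ext k
    rw [πL_apply, ιL_apply, ι₀_neg _ _ _ (by simp only [negE]; omega)]
    rfl

lemma lau_bij : Function.Bijective (fun f : Lau R N => (X : Polynomial R) • f) := by
  constructor
  · intro f f' h
    ext k
    have := congr($h (k + 1))
    simpa [predE_apply] using this
  · intro f
    refine ⟨Sh.ofF (Finsupp.comapDomain (fun k : ℤ => k + 1) f.toF
      (add_left_injective (1 : ℤ)).injOn), ?_⟩
    ext k
    rw [Sh.X_smul_apply]
    change f (predE k + 1) = f k
    rw [predE_apply]; simp

lemma X_mem : (X : Polynomial R) ∈ Jt J :=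
  Ideal.mem_sup_right (Ideal.mem_span_singleton_self _)

lemma poly_shift (s : ℕ) :
    Nonempty (DD (Jt J) s (Inv R N) ≃ₗ[Polynomial R] DD (Jt J) (s + 1) (PolynomialModule R N)) := by
  have hV : ∀ s n, Subsingleton (EX (Jt J) s (ModuleCat.of _ (Lau R N)) n) := by
    intro s n
    apply V_unit (Jt J) s (ModuleCat.of (Polynomial R) (Lau R N)) X (X_mem J)
    exact lau_bij N
  have hS := mkSES (ιL_inj (R := R) N) (πL_surj N) (πL_exact N)
  have := shiftEquiv (Jt J) s hS (hV _) (hV _)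
  exact this

lemma poly_zero : Subsingleton (DD (Jt J) 0 (PolynomialModule R N)) := by
  have : Subsingleton (tors (Jt J) (PolynomialModule R N)) := by
    refine subsingleton_of_forall_eq 0 (fun x => ?_)
    obtain ⟨x, n, hn⟩ := x
    apply Subtype.ext
    apply ιL_inj N
    have h1 := hn _ (Ideal.pow_mem_pow (X_mem J) n)
    have h2 : (X ^ n : Polynomial R) • ιL N x = 0 := by rw [← map_smul, h1, map_zero]
    change ιL N x = ιL N 0
    rw [map_zero]
    generalize ιL N x = y at h2
    clear h1 hn
    induction n with
    | zero => simpa using h2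
    | succ n ih =>
      rw [pow_succ', mul_smul] at h2
      exact ih ((lau_bij N).1 (h2.trans (smul_zero _).symm))
  exact (D0equiv (Jt J) (ModuleCat.of _ (PolynomialModule R N))).toEquiv.subsingleton

lemma lp_X (f : LaurentPolynomial ℤ) (k : ℤ) :
    ((X : Polynomial ℤ) • f).coeff k = f.coeff (k - 1) := by
  rw [Algebra.smul_def, LaurentPolynomial.algebraMap_eq_toLaurent, Polynomial.toLaurent_X]
  have := AddMonoidAlgebra.coeff_single_mul_add f (1 : ℤ) (1 : ℤ) (k - 1)
  rw [add_sub_cancel, one_mul] at this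
  exact this

lemma lp_C (r : ℤ) (f : LaurentPolynomial ℤ) (k : ℤ) :
    ((C r : Polynomial ℤ) • f).coeff k = r • f.coeff k := by
  rw [Algebra.smul_def, LaurentPolynomial.algebraMap_eq_toLaurent, Polynomial.toLaurent_C,
    ← LaurentPolynomial.smul_eq_C_mul]
  rfl

def lpMap : LaurentPolynomial ℤ →ₗ[Polynomial ℤ] Inv ℤ ℤ :=
  mkL { toFun := fun f => Sh.ofF (Finsupp.comapDomain negE f.coeff negE_inj.injOn)
        map_zero' := by ext k; rfl
        map_add' := by intro f f'; ext k; rfl }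
    (by
      intro r f; ext k
      rw [Sh.C_smul_apply]
      exact lp_C _ _ _)
    (by
      intro f; ext k
      rw [Sh.X_smul_apply]
      refine (lp_X _ _).trans ?_
      change f.coeff _ = f.coeff (negE (k + 1))
      congr 1
      simp only [negE]; push_cast; ring)

lemma lpMap_apply (f : LaurentPolynomial ℤ) (k : ℕ) : lpMap f k = f.coeff (negE k) := rfl

lemma lpMap_surj : Function.Surjective lpMap := by
  intro y
  obtain ⟨x, hx⟩ := Finsupp.comapDomain_surjective negE_inj y.toF
  exact ⟨.ofCoeff x, hx⟩

lemma lpMap_ker : LinearMap.ker lpMap =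
    LinearMap.range (Algebra.linearMap (Polynomial ℤ) (LaurentPolynomial ℤ)) := by
  ext f
  constructor
  · intro h
    have h0 : ∀ k : ℤ, k < 0 → f.coeff k = 0 := by
      intro k hk
      have := congr($h (-1 - k).toNat)
      rw [lpMap_apply] at this
      have e : negE (-1 - k).toNat = k := by simp only [negE]; omega
      rwa [e] at this
    refine ⟨.ofFinsupp (.ofCoeff (Finsupp.comapDomain ((↑) : ℕ → ℤ) f.coeff Nat.cast_injective.injOn)), ?_⟩
    rw [Algebra.linearMap_apply, LaurentPolynomial.algebraMap_eq_toLaurent]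
    apply LaurentPolynomial.ext
    intro k
    rw [LaurentPolynomial.coeff_toLaurent]
    rcases lt_or_ge k 0 with hk | hk
    · rw [h0 k hk]
      exact Finsupp.mapDomain_of_notMem_range _ _ (by rintro ⟨n, hn⟩; simp at hn; omega)
    · obtain ⟨n, rfl⟩ := Int.eq_ofNat_of_zero_le hk
      exact Finsupp.mapDomain_apply (Nat.castEmbedding (R := ℤ)).injective _ n
  · rintro ⟨p, rfl⟩
    rw [LinearMap.mem_ker]
    ext k
    rw [lpMap_apply, Algebra.linearMap_apply, LaurentPolynomial.algebraMap_eq_toLaurent,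
      LaurentPolynomial.coeff_toLaurent]
    exact Finsupp.mapDomain_of_notMem_range _ _ (by rintro ⟨n, hn⟩; simp [negE] at hn; omega)

def lqEquiv : LaurentQuot ≃ₗ[Polynomial ℤ] Inv ℤ ℤ :=
  Submodule.quotEquivOfEq _ _ lpMap_ker.symm ≪≫ₗ lpMap.quotKerEquivOfSurjective lpMap_surj

/-- as additive -/
def lqZ : LaurentQuot ≃ₗ[ℤ] (ℕ →₀ ℤ) := (lqEquiv.toAddEquiv : LaurentQuot ≃+ (ℕ →₀ ℤ)).toIntLinearEquiv

lemma lqZ_X (z : LaurentQuot) (k : ℕ) : lqZ ((X : Polynomial ℤ) • z) k = lqZ z (k + 1) := by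
  change (lqEquiv ((X : Polynomial ℤ) • z)) k = _
  rw [map_smul, Sh.X_smul_apply]
  rfl

def tenEquiv (M : Type u) [AddCommGroup M] [Module R M] :
    TensorProduct ℤ M LaurentQuot ≃ₗ[R] (ℕ →₀ M) :=
  TensorProduct.AlgebraTensorModule.congr (LinearEquiv.refl R M) lqZ ≪≫ₗ
    TensorProduct.finsuppScalarRight ℤ R M ℕ

lemma tenEquiv_X (M : Type u) [AddCommGroup M] [Module R M] (z : TensorProduct ℤ M LaurentQuot) (k : ℕ) :
    tenEquiv (R := R) M (LinearMap.lTensor M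
            (DistribMulAction.toLinearMap ℤ LaurentQuot (Polynomial.X : Polynomial ℤ)) z) k =
      tenEquiv (R := R) M z (k + 1) := by
  induction z with
  | zero => simp
  | add a b ha hb => simp only [map_add, Finsupp.add_apply, ha, hb]
  | tmul m z =>
    rw [LinearMap.lTensor_tmul]
    simp only [tenEquiv, LinearEquiv.trans_apply, TensorProduct.AlgebraTensorModule.congr_tmul,
      TensorProduct.finsuppScalarRight_apply_tmul_apply]
    congr 1
    exact lqZ_X z k

end fin
end LCP

/-- For a Noetherian ring `R`, an ideal `J ⊆ R` and an `R`-module `N`, with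
`J̃ = J·R[t] + (t) ⊆ R[t]` and `N[t]` the polynomial module: `H⁰_{J̃}(N[t]) = 0` and
`H^s_{J̃}(N[t]) ≅ H^{s−1}_J(N) ⊗_ℤ (ℤ[t,t⁻¹]/ℤ[t])` for all `s ≥ 1`, the isomorphism
being `R`-linear and intertwining the action of `t` on `N[t]` with the shift action of
`t` on the second tensor factor. -/
theorem localCohomology_polynomialModule {R : Type u} [CommRing R] [IsNoetherianRing R]
    (J : Ideal R) (N : Type u) [AddCommGroup N] [Module R N] :
    Subsingleton
      ((localCohomology (Ideal.map Polynomial.C J ⊔ Ideal.span {Polynomial.X}) 0).obj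
        (ModuleCat.of (Polynomial R) (PolynomialModule R N))) ∧
    ∀ s : ℕ, 1 ≤ s →
      letI : Module R
          ((localCohomology (Ideal.map Polynomial.C J ⊔ Ideal.span {Polynomial.X}) s).obj
            (ModuleCat.of (Polynomial R) (PolynomialModule R N))) :=
        Module.compHom _ (Polynomial.C : R →+* Polynomial R)
      ∃ e : ((localCohomology (Ideal.map Polynomial.C J ⊔ Ideal.span {Polynomial.X}) s).obj
              (ModuleCat.of (Polynomial R) (PolynomialModule R N)))
            ≃ₗ[R]
            TensorProduct ℤ ((localCohomology J (s - 1)).obj (ModuleCat.of R N)) LaurentQuot,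
        ∀ z, e ((Polynomial.X : Polynomial R) • z) =
          (LinearMap.lTensor ((localCohomology J (s - 1)).obj (ModuleCat.of R N))
            (DistribMulAction.toLinearMap ℤ LaurentQuot (Polynomial.X : Polynomial ℤ)))
            (e z) := by
  constructor
  · have := LCP.poly_zero J N
    exact (LCP.DequivLC (LCP.Jt J) 0 (ModuleCat.of _ (PolynomialModule R N))).symm.toEquiv.subsingleton
  intro s hs
  obtain ⟨s, rfl⟩ : ∃ t, s = t + 1 := ⟨s - 1, by omega⟩
  letI : Module R
          ((localCohomology (Ideal.map Polynomial.C J ⊔ Ideal.span {Polynomial.X}) (s + 1)).obj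
            (ModuleCat.of (Polynomial R) (PolynomialModule R N))) :=
        Module.compHom _ (Polynomial.C : R →+* Polynomial R)
  obtain ⟨e1⟩ := LCP.poly_shift J N s
  obtain ⟨e2⟩ := LCP.inv_all J s N
  let H := (localCohomology J s).obj (ModuleCat.of R N)
  let e3 := (LCP.DequivLC (LCP.Jt J) (s + 1) (ModuleCat.of _ (PolynomialModule R N))).symm ≪≫ₗ e1.symm ≪≫ₗ e2 ≪≫ₗ
    LCP.Sh.congr (g := LCP.succE) (LCP.DequivLC J s (ModuleCat.of R N))
  let a : ((localCohomology (Ideal.map Polynomial.C J ⊔ Ideal.span {Polynomial.X}) (s + 1)).obj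
              (ModuleCat.of (Polynomial R) (PolynomialModule R N))) ≃ₗ[R] (ℕ →₀ H) :=
    { (e3.toAddEquiv : _ ≃+ LCP.Inv R H) with
      map_smul' := by
        intro r z
        apply Finsupp.ext
        intro k
        change (e3 ((Polynomial.C r : Polynomial R) • z)) k = r • (e3 z) k
        rw [map_smul, LCP.Sh.C_smul_apply] }
  refine ⟨a ≪≫ₗ (LCP.tenEquiv (R := R) H).symm, fun z => ?_⟩
  apply (LCP.tenEquiv (R := R) H).injective
  apply Finsupp.ext
  intro k
  refine Eq.trans ?_ (LCP.tenEquiv_X (R := R) H _ k).symm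
  rw [LinearEquiv.trans_apply, LinearEquiv.trans_apply, LinearEquiv.apply_symm_apply, LinearEquiv.apply_symm_apply]
  change (e3 ((Polynomial.X : Polynomial R) • z)) k = (e3 z) (k + 1)
  rw [map_smul, LCP.Sh.X_smul_apply]
  rfl

end
end

section
/- Let d be a nonzero element of ℤ₂ and let P be the ℤ₂[B]-module with two generators D and b and the single defining relation B·D = d·b, i.e. P = ℤ₂[B]^{⊕2}/⟨(B, −d)⟩. Then B acts injectively on P; the localization P_B is a free ℤ₂[B, B⁻¹]-module of rank one generated by the image of b; and the cokernel of the localization map P → P_B is isomorphic as a ℤ₂[B]-module to ℤ₂[B, B⁻¹]/(ℤ₂[B] + ℤ₂·d·B⁻¹), in which d times the class of b/B is zero; as a ℤ₂-module this cokernel is isomorphic to (ℤ₂/d) ⊕ ⨁_{k≥2} ℤ₂. -/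
set_option synthInstance.maxHeartbeats 400000

noncomputable section

/-- `ℤ₂[B]`, the polynomial ring over the 2-adic integers with `B = X`. -/
abbrev S2 : Type _ := Polynomial ℤ_[2]

/-- The `ℤ₂[B]`-module `P = ℤ₂[B]{D, b}/(B·D = d·b)`. -/
abbrev Pmod (d : ℤ_[2]) : Type _ :=
  (S2 × S2) ⧸ Submodule.span S2 {((Polynomial.X : S2), -(Polynomial.C d))}

/-- The generator `b` of `P`. -/
def genb (d : ℤ_[2]) : Pmod d := Submodule.Quotient.mk ((0 : S2), (1 : S2))

/-- The localization `P_B` of `P` away from `B`. -/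
abbrev PmodLoc (d : ℤ_[2]) : Type _ :=
  LocalizedModule (Submonoid.powers (Polynomial.X : S2)) (Pmod d)

/-- The localization map `P → P_B`. -/
abbrev locMapP (d : ℤ_[2]) : Pmod d →ₗ[S2] PmodLoc d :=
  LocalizedModule.mkLinearMap (Submonoid.powers (Polynomial.X : S2)) (Pmod d)

/-- The cokernel `P/B^∞` of `P → P_B`. -/
abbrev PmodCok (d : ℤ_[2]) : Type _ := PmodLoc d ⧸ LinearMap.range (locMapP d)

/-- `ℤ₂[B,B⁻¹]/(ℤ₂[B] + ℤ₂·d·B⁻¹)`. -/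
abbrev Wmod (d : ℤ_[2]) : Type _ :=
  LaurentPolynomial ℤ_[2] ⧸
    Submodule.span S2
      (Set.range (Polynomial.toLaurent : S2 → LaurentPolynomial ℤ_[2]) ∪
        {LaurentPolynomial.C d * LaurentPolynomial.T (-1)})

/-- The cokernel `P/B^∞` as a `ℤ₂`-module. -/
instance (d : ℤ_[2]) : Module ℤ_[2] (PmodCok d) :=
  Module.compHom _ (Polynomial.C : ℤ_[2] →+* S2)

lemma S2_smul_L (f : S2) (l : LaurentPolynomial ℤ_[2]) :
    f • l = Polynomial.toLaurent f * l := rfl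

/-- The embedding of `P` into Laurent polynomials. -/
def phiP (d : ℤ_[2]) : Pmod d →ₗ[S2] LaurentPolynomial ℤ_[2] :=
  Submodule.liftQ _
    (LinearMap.coprod
      (LinearMap.toSpanSingleton S2 (LaurentPolynomial ℤ_[2])
        (LaurentPolynomial.C d * LaurentPolynomial.T (-1)))
      (LinearMap.toSpanSingleton S2 (LaurentPolynomial ℤ_[2]) 1)) (by
    rw [Submodule.span_le, Set.singleton_subset_iff]
    simp only [SetLike.mem_coe, LinearMap.mem_ker, LinearMap.coprod_apply,
      LinearMap.toSpanSingleton_apply, S2_smul_L, map_neg, Polynomial.toLaurent_X,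
      Polynomial.toLaurent_C]
    rw [mul_left_comm, ← LaurentPolynomial.T_add]
    simp)

lemma phiP_mk (d : ℤ_[2]) (f g : S2) :
    phiP d (Submodule.Quotient.mk (f, g)) =
      Polynomial.toLaurent f * (LaurentPolynomial.C d * LaurentPolynomial.T (-1))
        + Polynomial.toLaurent g := by
  have : phiP d (Submodule.Quotient.mk (f, g)) =
    f • (LaurentPolynomial.C d * LaurentPolynomial.T (-1)) +
      g • (1 : LaurentPolynomial ℤ_[2]) := rfl
  rw [this, S2_smul_L, S2_smul_L, mul_one]

lemma phiP_inj (d : ℤ_[2]) (hd : d ≠ 0) : Function.Injective (phiP d) := by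
  rw [injective_iff_map_eq_zero]
  intro p hp
  obtain ⟨⟨f, g⟩, rfl⟩ := Submodule.Quotient.mk_surjective _ p
  rw [phiP_mk] at hp
  have h1 : f * Polynomial.C d + g * Polynomial.X = 0 := by
    apply Polynomial.toLaurent_injective
    have := congrArg (· * (LaurentPolynomial.T 1 : LaurentPolynomial ℤ_[2])) hp
    simp only [add_mul, zero_mul, mul_assoc, ← LaurentPolynomial.T_add] at this
    simpa using this
  have h2 : f.coeff 0 = 0 := by
    have := congrArg (fun q => Polynomial.coeff q 0) h1
    simpa [hd] using this
  obtain ⟨h, rfl⟩ := Polynomial.X_dvd_iff.2 h2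
  have h3 : h * Polynomial.C d + g = 0 := by
    have : (h * Polynomial.C d + g) * Polynomial.X = 0 := by rw [← h1]; ring
    exact (mul_eq_zero.1 this).resolve_right Polynomial.X_ne_zero
  rw [Submodule.Quotient.mk_eq_zero, Submodule.mem_span_singleton]
  refine ⟨h, ?_⟩
  ext1
  · simp [mul_comm]
  · simp only [Prod.smul_mk, smul_eq_mul]
    linear_combination -h3

lemma L_units (x : Submonoid.powers (Polynomial.X : S2)) :
    IsUnit (algebraMap S2 (Module.End S2 (LaurentPolynomial ℤ_[2])) x) :=
  IsLocalizedModule.map_units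
    (S := Submonoid.powers (Polynomial.X : S2))
    (Algebra.linearMap S2 (LaurentPolynomial ℤ_[2])) x

lemma phiP_loc (d : ℤ_[2]) (hd : d ≠ 0) :
    IsLocalizedModule (Submonoid.powers (Polynomial.X : S2)) (phiP d) where
  map_units := L_units
  surj y := by
    obtain ⟨n, f, hf⟩ := LaurentPolynomial.exists_T_pow y
    refine ⟨(Submodule.Quotient.mk (0, f), ⟨Polynomial.X ^ n, n, rfl⟩), ?_⟩
    rw [phiP_mk, Submonoid.smul_def, S2_smul_L, hf, Polynomial.toLaurent_X_pow, map_zero, zero_mul, zero_add, mul_comm]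
  exists_of_eq h := ⟨1, by rw [phiP_inj d hd h]⟩

lemma single_mem (d : ℤ_[2]) (n : ℕ) (a : ℤ_[2]) :
    LaurentPolynomial.C a * LaurentPolynomial.T (n : ℤ) ∈ LinearMap.range (phiP d) :=
  ⟨Submodule.Quotient.mk (0, Polynomial.C a * Polynomial.X ^ n), by simp [phiP_mk]⟩

/-- Negative coefficients. -/
def qL (d : ℤ_[2]) : LaurentPolynomial ℤ_[2] →ₗ[ℤ_[2]]
    (ℤ_[2] ⧸ Ideal.span {d}) × ({k : ℕ // 2 ≤ k} →₀ ℤ_[2]) where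
  toFun f := (Ideal.Quotient.mk _ (f.coeff (-1)),
    Finsupp.comapDomain (fun k : {k : ℕ // 2 ≤ k} => (-(k.1 : ℤ))) f.coeff
      (fun a _ b _ h => by ext; simpa using h))
  map_add' f g := by
    ext
    · simp
    · rfl
  map_smul' c f := by
    ext
    · rfl
    · rfl

lemma qL_fst (d : ℤ_[2]) (f : LaurentPolynomial ℤ_[2]) :
    (qL d f).1 = Ideal.Quotient.mk _ (f.coeff (-1)) := rfl

lemma qL_snd (d : ℤ_[2]) (f : LaurentPolynomial ℤ_[2]) (k : {k : ℕ // 2 ≤ k}) :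
    (qL d f).2 k = f.coeff (-(k.1 : ℤ)) := rfl

lemma qL_phi (d : ℤ_[2]) (p : Pmod d) : qL d (phiP d p) = 0 := by
  obtain ⟨⟨f, g⟩, rfl⟩ := Submodule.Quotient.mk_surjective _ p
  rw [phiP_mk, map_add]
  have h1 : qL d (Polynomial.toLaurent f *
      (LaurentPolynomial.C d * LaurentPolynomial.T (-1))) = 0 := by
    induction f using Polynomial.induction_on' with
    | add p q hp hq => rw [map_add, add_mul, map_add, hp, hq, add_zero]
    | monomial n a =>
      have : Polynomial.toLaurent (Polynomial.monomial n a) *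
          (LaurentPolynomial.C d * LaurentPolynomial.T (-1)) =
          AddMonoidAlgebra.single ((n : ℤ) - 1) (a * d) := by
        rw [LaurentPolynomial.single_eq_C_mul_T, ← Polynomial.C_mul_X_pow_eq_monomial,
          Polynomial.toLaurent_C_mul_X_pow, LaurentPolynomial.T_sub, map_mul]
        ring
      rw [this]
      ext k
      · rw [qL_fst]
        simp only [AddMonoidAlgebra.coeff_single, Finsupp.single_apply, Prod.fst_zero]
        split_ifs
        · rw [Ideal.Quotient.eq_zero_iff_mem, Ideal.mem_span_singleton]
          exact dvd_mul_left _ _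
        · simp
      · rw [qL_snd]
        have := k.2
        simp only [AddMonoidAlgebra.coeff_single, Finsupp.single_apply]
        rw [if_neg (by omega)]; rfl
  have h2 : qL d (Polynomial.toLaurent g) = 0 := by
    induction g using Polynomial.induction_on' with
    | add p q hp hq => rw [map_add, map_add, hp, hq, add_zero]
    | monomial n a =>
      rw [← Polynomial.C_mul_X_pow_eq_monomial,
          Polynomial.toLaurent_C_mul_X_pow, ← LaurentPolynomial.single_eq_C_mul_T]
      ext k
      · rw [qL_fst]
        simp only [AddMonoidAlgebra.coeff_single, Finsupp.single_apply]
        rw [if_neg (by omega)]; simp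
      · rw [qL_snd]
        have := k.2
        simp only [AddMonoidAlgebra.coeff_single, Finsupp.single_apply]
        rw [if_neg (by omega)]; rfl
  rw [h1, h2, add_zero]

lemma qL_ker (d : ℤ_[2]) (f : LaurentPolynomial ℤ_[2]) (hf : qL d f = 0) :
    f ∈ LinearMap.range (phiP d) := by
  have hs : f = f.coeff.sum (fun n a => LaurentPolynomial.C a * LaurentPolynomial.T n) := by
    conv_lhs => rw [← AddMonoidAlgebra.sum_coeff_single f]
    exact Finsupp.sum_congr fun n _ => LaurentPolynomial.single_eq_C_mul_T _ _
  rw [hs]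
  refine Submodule.sum_mem _ fun n _ => ?_
  rcases lt_trichotomy n (-1) with h | h | h
  · have h0 : f.coeff n = 0 := by
      have := qL_snd d f ⟨n.natAbs, by omega⟩
      rw [hf] at this
      have e : (-(n.natAbs : ℤ)) = n := by omega
      simp only [e] at this
      exact this.symm
    simp [h0]
  · subst h
    have h0 := qL_fst d f
    rw [hf] at h0
    have h1 := Ideal.mem_span_singleton.1 (Ideal.Quotient.eq_zero_iff_mem.1 h0.symm)
    obtain ⟨a, ha⟩ := h1
    refine ⟨Submodule.Quotient.mk (Polynomial.C a, 0), ?_⟩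
    beta_reduce
    rw [phiP_mk, ha, map_mul, Polynomial.toLaurent_C, map_zero]
    ring
  · obtain ⟨m, rfl⟩ := Int.eq_ofNat_of_zero_le (show 0 ≤ n by omega)
    exact single_mem d m _

lemma qL_surj (d : ℤ_[2]) : Function.Surjective (qL d) := by
  rw [← LinearMap.range_eq_top, eq_top_iff]
  rintro ⟨x, h⟩ -
  have hsplit : (x, h) = (x, (0 : {k : ℕ // 2 ≤ k} →₀ ℤ_[2])) + (0, h) := by simp
  rw [hsplit]
  refine Submodule.add_mem _ ?_ ?_
  · obtain ⟨a, rfl⟩ := Ideal.Quotient.mk_surjective x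
    refine ⟨AddMonoidAlgebra.single (-1) a, ?_⟩
    ext k
    · rw [qL_fst, AddMonoidAlgebra.coeff_single, Finsupp.single_eq_same]
    · rw [qL_snd]
      have := k.2
      simp only [AddMonoidAlgebra.coeff_single, Finsupp.single_apply]
      rw [if_neg (by omega)]; rfl
  · induction h using Finsupp.induction_linear with
    | zero => exact Submodule.zero_mem _
    | add f g hf hg =>
      have := Submodule.add_mem _ (hf (by simp)) (hg (by simp))
      simpa using this
    | single k c =>
      refine ⟨AddMonoidAlgebra.single (-(k.1 : ℤ)) c, ?_⟩
      have := k.2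
      ext j
      · rw [qL_fst]
        simp only [AddMonoidAlgebra.coeff_single, Finsupp.single_apply]
        rw [if_neg (by omega)]; simp
      · rw [qL_snd]
        simp only [AddMonoidAlgebra.coeff_single, Finsupp.single_apply, neg_inj, Nat.cast_inj,
          Subtype.ext_iff]

lemma phiP_range (d : ℤ_[2]) : LinearMap.range (phiP d) = Submodule.span S2
      (Set.range (Polynomial.toLaurent : S2 → LaurentPolynomial ℤ_[2]) ∪
        {LaurentPolynomial.C d * LaurentPolynomial.T (-1)}) := by
  apply le_antisymm
  · rintro _ ⟨p, rfl⟩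
    obtain ⟨⟨f, g⟩, rfl⟩ := Submodule.Quotient.mk_surjective _ p
    rw [phiP_mk, ← S2_smul_L]
    exact Submodule.add_mem _
      (Submodule.smul_mem _ _ (Submodule.subset_span (Or.inr rfl)))
      (Submodule.subset_span (Or.inl ⟨g, rfl⟩))
  · rw [Submodule.span_le]
    rintro _ (⟨g, rfl⟩ | rfl)
    · exact ⟨Submodule.Quotient.mk (0, g), by simp [phiP_mk]⟩
    · exact ⟨Submodule.Quotient.mk (1, 0), by simp [phiP_mk]⟩

/-- `P_B` is the Laurent polynomial module. -/
def isoL (d : ℤ_[2]) (hd : d ≠ 0) : PmodLoc d ≃ₗ[S2] LaurentPolynomial ℤ_[2] :=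
  haveI := phiP_loc d hd
  IsLocalizedModule.iso (Submonoid.powers (Polynomial.X : S2)) (phiP d)

lemma isoL_loc (d : ℤ_[2]) (hd : d ≠ 0) (p : Pmod d) :
    isoL d hd (locMapP d p) = phiP d p := by
  have := phiP_loc d hd
  exact IsLocalizedModule.iso_mk_one (Submonoid.powers (Polynomial.X : S2)) (phiP d) p

lemma mem_range_loc (d : ℤ_[2]) (hd : d ≠ 0) (x : PmodLoc d) :
    x ∈ LinearMap.range (locMapP d) ↔ isoL d hd x ∈ LinearMap.range (phiP d) := by
  constructor
  · rintro ⟨p, rfl⟩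
    exact ⟨p, (isoL_loc d hd p).symm⟩
  · rintro ⟨p, hp⟩
    exact ⟨p, (isoL d hd).injective (by rw [isoL_loc, hp])⟩

/-- The cokernel maps to the negative coefficients. -/
def cokHom (d : ℤ_[2]) (hd : d ≠ 0) : PmodCok d →+
    (ℤ_[2] ⧸ Ideal.span {d}) × ({k : ℕ // 2 ≤ k} →₀ ℤ_[2]) :=
  QuotientAddGroup.lift (LinearMap.range (locMapP d)).toAddSubgroup
    ((qL d).toAddMonoidHom.comp (isoL d hd).toLinearMap.toAddMonoidHom) (by
      rintro _ ⟨p, rfl⟩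
      show qL d (isoL d hd (locMapP d p)) = 0
      rw [isoL_loc, qL_phi])

lemma cokHom_mk (d : ℤ_[2]) (hd : d ≠ 0) (x : PmodLoc d) :
    cokHom d hd (Submodule.Quotient.mk x) = qL d (isoL d hd x) := rfl

lemma part2 (d : ℤ_[2]) (hd : d ≠ 0) : Function.Bijective
      (fun r : Localization (Submonoid.powers (Polynomial.X : S2)) =>
        r • (locMapP d (genb d))) := by
  let ψ : Localization (Submonoid.powers (Polynomial.X : S2)) →ₗ[S2] PmodLoc d :=
    (LinearMap.toSpanSingleton (Localization (Submonoid.powers (Polynomial.X : S2)))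
      (PmodLoc d) (locMapP d (genb d))).restrictScalars S2
  let ε : Localization (Submonoid.powers (Polynomial.X : S2)) ≃ₐ[S2] LaurentPolynomial ℤ_[2] :=
    IsLocalization.algEquiv (Submonoid.powers (Polynomial.X : S2)) _ _
  have key : (isoL d hd).toLinearMap ∘ₗ ψ = ε.toLinearMap := by
    apply IsLocalizedModule.ext (Submonoid.powers (Polynomial.X : S2))
      (Algebra.linearMap S2 (Localization (Submonoid.powers (Polynomial.X : S2)))) L_units
    ext1
    have hψ : ψ 1 = locMapP d (genb d) := by
      change (1 : Localization (Submonoid.powers (Polynomial.X : S2))) •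
        (locMapP d (genb d)) = _
      rw [one_smul]
    have : phiP d (genb d) = 1 := by rw [genb, phiP_mk]; simp
    simp only [LinearMap.comp_apply, Algebra.linearMap_apply, map_one, LinearEquiv.coe_coe, hψ,
      isoL_loc, this, AlgEquiv.toLinearMap_apply]
  have h2 : Function.Bijective ((isoL d hd) ∘ ψ) := by
    have : ((isoL d hd) ∘ ψ) = ε := by
      funext r
      exact LinearMap.congr_fun key r
    rw [this]
    exact ε.bijective
  exact (Function.Bijective.of_comp_iff' (isoL d hd).bijective ψ).1 h2

/-- Let `d ≠ 0` in `ℤ₂` and `P = ℤ₂[B]{D, b}/(B·D = d·b)`.  Then `B` acts injectively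
on `P`; the localization `P_B` is free of rank one over `ℤ₂[B,B⁻¹]` on the image of
`b`; and the cokernel of `P → P_B` is `ℤ₂[B,B⁻¹]/(ℤ₂[B] + ℤ₂·d·B⁻¹)`, in which `d`
times the class of `b/B` vanishes; as a `ℤ₂`-module this cokernel is
`(ℤ₂/d) ⊕ ⨁_{k≥2} ℤ₂`. -/
theorem Pmod_loc_cok (d : ℤ_[2]) (hd : d ≠ 0) :
    Function.Injective (fun p : Pmod d => (Polynomial.X : S2) • p) ∧
    Function.Bijective
      (fun r : Localization (Submonoid.powers (Polynomial.X : S2)) =>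
        r • (locMapP d (genb d))) ∧
    Nonempty (PmodCok d ≃ₗ[S2] Wmod d) ∧
    (Polynomial.C d : S2) • (Submodule.Quotient.mk
        (LocalizedModule.mk (genb d) ⟨Polynomial.X, Submonoid.mem_powers _⟩) : PmodCok d) = 0 ∧
    Nonempty (PmodCok d ≃ₗ[ℤ_[2]]
      (ℤ_[2] ⧸ Ideal.span {d}) × ({k : ℕ // 2 ≤ k} →₀ ℤ_[2])) := by
  refine ⟨?_, part2 d hd, ?_, ?_, ?_⟩
  · intro p q h
    apply phiP_inj d hd
    have h' := congrArg (phiP d) h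
    simp only [map_smul, S2_smul_L, Polynomial.toLaurent_X] at h'
    exact (LaurentPolynomial.isUnit_T 1).mul_left_cancel h'
  · refine ⟨Submodule.Quotient.equiv _ _ (isoL d hd) ?_⟩
    rw [← phiP_range]
    ext y
    rw [Submodule.mem_map]
    constructor
    · rintro ⟨x, hx, rfl⟩
      exact (mem_range_loc d hd x).1 hx
    · intro hy
      exact ⟨(isoL d hd).symm y, (mem_range_loc d hd _).2 (by simpa using hy), by simp⟩
  · rw [← Submodule.Quotient.mk_smul, Submodule.Quotient.mk_eq_zero]
    refine ⟨Submodule.Quotient.mk (1, 0), ?_⟩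
    rw [LocalizedModule.mkLinearMap_apply, LocalizedModule.smul'_mk, LocalizedModule.mk_eq]
    refine ⟨1, ?_⟩
    rw [one_smul, one_smul, one_smul, Submonoid.smul_def, genb, ← Submodule.Quotient.mk_smul,
      ← Submodule.Quotient.mk_smul, Submodule.Quotient.eq]
    apply Submodule.subset_span
    simp
  · refine ⟨LinearEquiv.ofBijective
      { toFun := cokHom d hd, map_add' := map_add _, map_smul' := ?_ } ⟨?_, ?_⟩⟩
    · intro c x
      obtain ⟨x, rfl⟩ := Submodule.Quotient.mk_surjective _ x
      change cokHom d hd (Submodule.Quotient.mk ((Polynomial.C c : S2) • x)) = _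
      rw [cokHom_mk, cokHom_mk, map_smul, S2_smul_L, Polynomial.toLaurent_C,
        ← LaurentPolynomial.smul_eq_C_mul, map_smul]
      rfl
    · show Function.Injective (cokHom d hd)
      rw [injective_iff_map_eq_zero]
      intro x hx
      obtain ⟨x, rfl⟩ := Submodule.Quotient.mk_surjective _ x
      rw [cokHom_mk] at hx
      rw [Submodule.Quotient.mk_eq_zero, mem_range_loc d hd]
      exact qL_ker d _ hx
    · intro y
      obtain ⟨l, rfl⟩ := qL_surj d y
      exact ⟨Submodule.Quotient.mk ((isoL d hd).symm l),
        (cokHom_mk d hd _).trans (by rw [LinearEquiv.apply_symm_apply])⟩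

end
end
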